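/- Let (X, μ) be a topological space with a Borel measure μ such that X is σ-finite with respect to μ, and suppose (Y, d, H^h) satisfies property (H∞). If f : X → Y is a measurable surjection, then there exists a set N ⊆ X with μ(N) = 0 and H^h(f(N)) > 0. Moreover, if in addition the topology of X has a countable basis and points of X are closed, and f has the property that for every closed set F ⊆ Y the preimage f⁻¹(F) is a countable union of closed sets, then N can be chosen to be perfect. -/

import Mathlib

open MeasureTheory Set Filter Topology
open scoped NNReal ENNReal

universe u v

/-- A Hausdorff (gauge) function `h : [0,∞) → [0,∞]`: nondecreasing, right-continuous,
and positive on positive arguments. -/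
structure IsHausdorffFunction (h : ℝ≥0 → ℝ≥0∞) : Prop where
  mono : Monotone h
  right_continuous : ∀ t : ℝ≥0, ContinuousWithinAt h (Set.Ici t) t
  pos : ∀ t : ℝ≥0, 0 < t → 0 < h t

/-- `h` is of finite order: `limsup_{t→0+} h(3t)/h(t) < ∞`. -/
def FiniteOrder (h : ℝ≥0 → ℝ≥0∞) : Prop :=
  Filter.limsup (fun t : ℝ≥0 => h (3 * t) / h t) (nhdsWithin 0 (Set.Ioi 0)) < ⊤

/-- The Hausdorff (outer) measure built from the gauge `h`:
`H^h(E) = sup_{δ>0} inf { Σ h(diam Uᵢ) : E ⊆ ⋃ Uᵢ, diam Uᵢ ≤ δ }`. -/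
noncomputable def hausdorffM {Z : Type*} [EMetricSpace Z] (h : ℝ≥0 → ℝ≥0∞) :
    MeasureTheory.OuterMeasure Z :=
  MeasureTheory.OuterMeasure.mkMetric (fun d => h d.toNNReal)

/-- A set `S` is σ-finite with respect to an outer measure `μ` if it is a countable union
of Carathéodory-measurable sets of finite measure. -/
def SigmaFiniteSet {Z : Type*} (μ : MeasureTheory.OuterMeasure Z) (S : Set Z) : Prop :=
  ∃ A : ℕ → Set Z, (∀ n, μ.IsCaratheodory (A n) ∧ μ (A n) < ⊤) ∧ S = ⋃ n, A n

/-- A metric space has finite structural dimension if for every `ξ > 0` there are `N` and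
`δ₀ > 0` such that every set of diameter `δ ≤ δ₀` can be covered by `N` sets of diameter
at most `ξ·δ`. -/
def FiniteStructuralDim (Z : Type*) [EMetricSpace Z] : Prop :=
  ∀ ξ : ℝ≥0, 0 < ξ → ∃ (N : ℕ) (δ₀ : ℝ≥0), 0 < δ₀ ∧
    ∀ s : Set Z, EMetric.diam s ≤ δ₀ →
      ∃ U : Fin N → Set Z, s ⊆ ⋃ i, U i ∧ ∀ i, EMetric.diam (U i) ≤ ξ * EMetric.diam s

/-- Property (H) for a subspace `Y` of the complete separable metric space `Z`. -/
structure PropertyH {Z : Type*} [MetricSpace Z] (Y : Set Z) (h : ℝ≥0 → ℝ≥0∞) : Prop where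
  complete : CompleteSpace Z
  separable : TopologicalSpace.SeparableSpace Z
  analytic : MeasureTheory.AnalyticSet Y
  hausdorff : IsHausdorffFunction h
  cont : Continuous h
  zero : h 0 = 0
  alt : FiniteOrder h ∨ FiniteStructuralDim Z ∨ ∀ x y z : Z, dist x z ≤ max (dist x y) (dist y z)

/-- Property (H∞): property (H) together with non-σ-finiteness of `Y` w.r.t. `H^h`. -/
def PropertyHInf {Z : Type*} [MetricSpace Z] (Y : Set Z) (h : ℝ≥0 → ℝ≥0∞) : Prop :=
  PropertyH Y h ∧ ¬ SigmaFiniteSet (hausdorffM h) Y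

/-- Property (Aκ): `X` is a union of κ-many measurable sets of finite measure, and
κ-many null sets always union to a null set. -/
def PropertyA {X : Type u} (μ : MeasureTheory.OuterMeasure X) (κ : Cardinal.{u}) : Prop :=
  (∃ (ι : Type u) (A : ι → Set X), Cardinal.mk ι = κ ∧ (⋃ i, A i) = Set.univ ∧
      ∀ i, μ.IsCaratheodory (A i) ∧ μ (A i) < ⊤) ∧
  ∀ (ι : Type u) (A : ι → Set X), Cardinal.mk ι = κ → (∀ i, μ (A i) = 0) → μ (⋃ i, A i) = 0

/-- A set is perfect if it is closed and every open set meeting it meets it in an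
infinite set. -/
def PerfectSet {X : Type*} [TopologicalSpace X] (C : Set X) : Prop :=
  IsClosed C ∧ ∀ O : Set X, IsOpen O → (O ∩ C).Nonempty → (O ∩ C).Infinite

/-- The gauge `d ↦ d^s`. -/
noncomputable def sGauge (s : ℝ≥0) : ℝ≥0 → ℝ≥0∞ := fun d => (d : ℝ≥0∞) ^ (s : ℝ)

/-- Hausdorff–Besicovitch dimension: the supremum of all `s ≥ 0` with `H^{d^s}(E) > 0`. -/
noncomputable def hDim {Z : Type*} [EMetricSpace Z] (E : Set Z) : ℝ≥0∞ :=
  ⨆ (s : ℝ≥0) (_ : 0 < hausdorffM (sGauge s) E), (s : ℝ≥0∞)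

namespace S5

/-- gauge on reals -/
noncomputable def hr (h : ℝ≥0 → ℝ≥0∞) (r : ℝ) : ℝ≥0∞ := h r.toNNReal

/-- nice gauges -/
structure Gg (h : ℝ≥0 → ℝ≥0∞) : Prop where
  mono : Monotone h
  cont : Continuous h
  zero : h 0 = 0
  pos : ∀ t : ℝ≥0, 0 < t → 0 < h t

/-- premeasures -/
noncomputable def Hd {Z : Type*} [MetricSpace Z] (h : ℝ≥0 → ℝ≥0∞) (δ : ℝ) : OuterMeasure Z :=
  OuterMeasure.mkMetric'.pre (fun s => h (Metric.ediam s).toNNReal) (ENNReal.ofReal δ)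

section basics
variable {Z : Type*} [MetricSpace Z] {h : ℝ≥0 → ℝ≥0∞}

theorem hr_mono (G : Gg h) : Monotone (hr h) := fun _ _ hab => G.mono (Real.toNNReal_mono hab)
theorem hr_cont (G : Gg h) : Continuous (hr h) := G.cont.comp continuous_real_toNNReal
theorem hr_zero (G : Gg h) : hr h 0 = 0 := by simp [hr, G.zero]
theorem hr_pos (G : Gg h) {r : ℝ} (hr0 : 0 < r) : 0 < hr h r := G.pos _ (by simpa using hr0)

theorem hr_small (G : Gg h) {a : ℝ≥0∞} (ha : 0 < a) {b : ℝ} (hb : 0 < b) :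
    ∃ r, 0 < r ∧ r ≤ b ∧ hr h r < a := by
  have h1 : ∀ᶠ r in 𝓝 (0 : ℝ), hr h r < a :=
    (hr_cont G).tendsto 0 |>.eventually (gt_mem_nhds (by rw [hr_zero G]; exact ha))
  have h2 : ∀ᶠ r in 𝓝[>] (0 : ℝ), hr h r < a ∧ r ∈ Ioo 0 b :=
    (h1.filter_mono nhdsWithin_le_nhds).and (Ioo_mem_nhdsGT hb)
  obtain ⟨r, hr1, hr2⟩ := h2.exists
  exact ⟨r, hr2.1, hr2.2.le, hr1⟩

theorem Hd_le {δ : ℝ} {X : Set Z} (hX : Metric.ediam X ≤ ENNReal.ofReal δ) :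
    Hd h δ X ≤ h (Metric.ediam X).toNNReal :=
  OuterMeasure.mkMetric'.pre_le hX

theorem Hd_le_hr (G : Gg h) {δ r : ℝ} {X : Set Z} (hX : Metric.ediam X ≤ ENNReal.ofReal r)
    (hr' : r ≤ δ) : Hd h δ X ≤ hr h r := by
  refine (Hd_le (hX.trans (ENNReal.ofReal_le_ofReal hr'))).trans (G.mono ?_)
  exact ENNReal.toNNReal_mono ENNReal.ofReal_ne_top hX

theorem Hd_anti {δ δ' : ℝ} (hd : δ ≤ δ') (X : Set Z) : Hd h δ' X ≤ Hd h δ X :=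
  OuterMeasure.mkMetric'.mono_pre _ (ENNReal.ofReal_le_ofReal hd) X

theorem Hd_cover (G : Gg h) {δ : ℝ} {X : Set Z} {a : ℝ≥0∞} (ha : Hd h δ X < a) :
    ∃ U : ℕ → Set Z, X ⊆ ⋃ n, U n ∧ (∀ n, Metric.ediam (U n) ≤ ENNReal.ofReal δ) ∧
      ∑' n, h (Metric.ediam (U n)).toNNReal < a := by
  rw [Hd, OuterMeasure.mkMetric'.pre, OuterMeasure.boundedBy_apply] at ha
  simp only [iInf_lt_iff] at ha
  obtain ⟨U, hU, hs⟩ := ha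
  have key : ∀ n, Metric.ediam (U n) ≤ ENNReal.ofReal δ ∧ h (Metric.ediam (U n)).toNNReal ≤
      ⨆ _ : (U n).Nonempty, extend (fun s (_ : Metric.ediam s ≤ ENNReal.ofReal δ) =>
        h (Metric.ediam s).toNNReal) (U n) := by
    intro n
    rcases (U n).eq_empty_or_nonempty with hn | hn
    · rw [hn]; simp [G.zero]
    · by_cases hd : Metric.ediam (U n) ≤ ENNReal.ofReal δ
      · refine ⟨hd, ?_⟩
        simp [hn, extend, hd]
      · exfalso
        have : (⨆ _ : (U n).Nonempty, extend (fun s (_ : Metric.ediam s ≤ ENNReal.ofReal δ) =>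
          h (Metric.ediam s).toNNReal) (U n)) = ⊤ := by
          simp [hn, extend, hd]
        have h2 := ENNReal.le_tsum (f := fun n => ⨆ _ : (U n).Nonempty,
          extend (fun s (_ : Metric.ediam s ≤ ENNReal.ofReal δ) =>
          h (Metric.ediam s).toNNReal) (U n)) n
        simp only [this] at h2
        exact absurd (h2.trans_lt hs) (by simp)
  exact ⟨U, hU, fun n => (key n).1, (ENNReal.tsum_le_tsum fun n => (key n).2).trans_lt hs⟩

theorem H_le {X : Set Z} {M : ℝ≥0∞} (hM : ∀ δ : ℝ, 0 < δ → Hd h δ X ≤ M) :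
    hausdorffM h X ≤ M := by
  rw [hausdorffM, OuterMeasure.mkMetric, OuterMeasure.mkMetric']
  simp only [OuterMeasure.iSup_apply]
  refine iSup₂_le fun r hr0 => ?_
  obtain ⟨δ, hδ, hδr⟩ : ∃ δ : ℝ, 0 < δ ∧ ENNReal.ofReal δ ≤ r := by
    obtain ⟨q, hq0, hq⟩ := ENNReal.lt_iff_exists_nnreal_btwn.1 hr0
    exact ⟨q, by exact_mod_cast hq0, by simpa using hq.le⟩
  exact (OuterMeasure.mkMetric'.mono_pre _ hδr X).trans (hM δ hδ)

theorem Hd_le_H {X : Set Z} {δ : ℝ} (hδ : 0 < δ) : Hd h δ X ≤ hausdorffM h X := by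
  rw [hausdorffM, OuterMeasure.mkMetric, OuterMeasure.mkMetric']
  simp only [OuterMeasure.iSup_apply]
  exact le_iSup₂ (f := fun (r : ℝ≥0∞) (_ : r > 0) => OuterMeasure.mkMetric'.pre
    (fun s : Set Z => h (Metric.ediam s).toNNReal) r X) (ENNReal.ofReal δ) (by simpa using hδ)

theorem Hd_L1 (G : Gg h) {δ : ℝ} {X : Set Z} (hX : Hd h 1 X < hr h δ) :
    Hd h δ X ≤ Hd h 1 X := by
  refine le_of_forall_gt fun a ha => ?_
  obtain ⟨U, hU, hd, hs⟩ := Hd_cover G (lt_min ha hX)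
  have h1 : ∀ n, Metric.ediam (U n) ≤ ENNReal.ofReal δ := by
    intro n
    by_contra hcon
    push Not at hcon
    have h3 : hr h δ ≤ h (Metric.ediam (U n)).toNNReal := by
      apply G.mono
      exact ENNReal.toNNReal_mono (ne_top_of_le_ne_top ENNReal.ofReal_ne_top (hd n)) hcon.le
    have := (h3.trans (ENNReal.le_tsum (f := fun n => h (Metric.ediam (U n)).toNNReal) n)).trans_lt
      (hs.trans_le (min_le_right _ _))
    exact lt_irrefl _ this
  calc Hd h δ X ≤ Hd h δ (⋃ n, U n) := measure_mono hU
    _ ≤ ∑' n, Hd h δ (U n) := measure_iUnion_le _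
    _ ≤ ∑' n, h (Metric.ediam (U n)).toNNReal := ENNReal.tsum_le_tsum fun n => Hd_le (h1 n)
    _ < a := hs.trans_le (min_le_left _ _)

theorem H_singleton (G : Gg h) (x : Z) : hausdorffM h ({x} : Set Z) = 0 := by
  refine le_antisymm (H_le fun δ hδ => (Hd_le (by simp)).trans ?_) bot_le
  simp [G.zero]

theorem H_countable (G : Gg h) {S : Set Z} (hS : S.Countable) : hausdorffM h S = 0 := by
  have := measure_biUnion_null_iff (μ := (hausdorffM h : OuterMeasure Z)) (s := fun x : Z => {x}) hS
  rw [biUnion_of_singleton] at this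
  exact this.2 fun x _ => H_singleton G x

/-- sigma-finite in the weak sense -/
def SF (h : ℝ≥0 → ℝ≥0∞) (Q : Set Z) : Prop :=
  ∃ A : ℕ → Set Z, Q ⊆ ⋃ n, A n ∧ ∀ n, hausdorffM h (A n) < ⊤

theorem SF_mono {P Q : Set Z} (hPQ : P ⊆ Q) (hQ : SF h Q) : SF h P := by
  obtain ⟨A, hA, h2⟩ := hQ
  exact ⟨A, hPQ.trans hA, h2⟩

theorem SF_of_finite {Q : Set Z} (hQ : hausdorffM h Q < ⊤) : SF h Q :=
  ⟨fun _ => Q, fun _ hx => mem_iUnion.2 ⟨0, hx⟩, fun _ => hQ⟩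

theorem SF_empty : SF h (∅ : Set Z) := SF_of_finite (by simp)

theorem SF_iUnion_nat {Q : ℕ → Set Z} (hQ : ∀ n, SF h (Q n)) : SF h (⋃ n, Q n) := by
  choose A hA hfin using hQ
  refine ⟨fun k => A k.unpair.1 k.unpair.2, ?_, fun k => hfin _ _⟩
  refine iUnion_subset fun n x hx => ?_
  obtain ⟨m, hm⟩ := mem_iUnion.1 (hA n hx)
  exact mem_iUnion.2 ⟨Nat.pair n m, by simpa using hm⟩

theorem SF_biUnion {ι : Type*} {s : Set ι} (hs : s.Countable) {Q : ι → Set Z}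
    (hQ : ∀ i ∈ s, SF h (Q i)) : SF h (⋃ i ∈ s, Q i) := by
  rcases s.eq_empty_or_nonempty with rfl | hne
  · simpa using SF_empty
  · obtain ⟨f, rfl⟩ := hs.exists_eq_range hne
    rw [biUnion_range]
    exact SF_iUnion_nat fun n => hQ _ (mem_range_self n)

theorem SF_union {P Q : Set Z} (hP : SF h P) (hQ : SF h Q) : SF h (P ∪ Q) := by
  rw [union_eq_iUnion]
  have := SF_biUnion (h := h) (s := (univ : Set Bool)) (to_countable _)
    (Q := fun b => cond b P Q) (by rintro (_|_) _ <;> assumption)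
  simpa using this

end basics

section balls
variable (Z : Type*) [MetricSpace Z] [TopologicalSpace.SeparableSpace Z] [Nonempty Z]

/-- countable family of balls -/
def BB : Set (Z × ℝ) := {p | p.1 ∈ range (TopologicalSpace.denseSeq Z) ∧ 0 < p.2 ∧ ∃ q : ℚ, p.2 = q}

theorem BB_countable : (BB Z).Countable := by
  refine ((countable_range (TopologicalSpace.denseSeq Z)).prod
    (countable_range ((↑) : ℚ → ℝ))).mono ?_
  rintro p ⟨h1, _, q, hq⟩
  exact ⟨h1, q, hq.symm⟩

end balls

/-- ball of a pair -/
abbrev cb {Z : Type*} [MetricSpace Z] (p : Z × ℝ) : Set Z := Metric.closedBall p.1 p.2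

section balls
variable {Z : Type*} [MetricSpace Z] [TopologicalSpace.SeparableSpace Z] [Nonempty Z]
  {h : ℝ≥0 → ℝ≥0∞}

theorem ball_of_set (G : Gg h) {U : Set Z} (hU : Metric.ediam U ≠ ⊤)
    {ε : ℝ≥0∞} (hε : 0 < ε) (hf : h (Metric.ediam U).toNNReal ≠ ⊤) :
    ∃ p ∈ BB Z, U ⊆ Metric.ball p.1 p.2 ∧ hr h p.2 ≤ h (Metric.ediam U).toNNReal + ε := by
  set d : ℝ := (Metric.ediam U).toReal with hd
  have hd0 : 0 ≤ d := ENNReal.toReal_nonneg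
  have hhd : h (Metric.ediam U).toNNReal = hr h d := by
    rw [hr, hd]; simp [ENNReal.toReal]
  have h1 : ∀ᶠ r in 𝓝 d, hr h r < hr h d + ε :=
    (hr_cont G).tendsto d |>.eventually (gt_mem_nhds (ENNReal.lt_add_right (hhd ▸ hf) hε.ne'))
  have h2 : ∀ᶠ r in 𝓝[>] d, hr h r < hr h d + ε := h1.filter_mono nhdsWithin_le_nhds
  obtain ⟨b, hb, hb2⟩ := (mem_nhdsGT_iff_exists_Ioo_subset).1 h2
  obtain ⟨q, hq1, hq2⟩ := exists_rat_btwn (show d < b from hb)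
  have hq3 : hr h q < hr h d + ε := hb2 ⟨hq1, hq2⟩
  obtain ⟨x, hx⟩ : ∃ x : Z, ∀ z ∈ U, dist z x ≤ d := by
    rcases U.eq_empty_or_nonempty with rfl | ⟨x, hx⟩
    · exact ⟨Classical.arbitrary Z, by simp⟩
    · refine ⟨x, fun z hz => ?_⟩
      rw [dist_edist]
      exact ENNReal.toReal_mono hU (Metric.edist_le_ediam_of_mem hz hx)
  obtain ⟨n, hn⟩ := (TopologicalSpace.denseRange_denseSeq Z).exists_dist_lt x (sub_pos.2 hq1)
  refine ⟨(TopologicalSpace.denseSeq Z n, (q : ℝ)), ⟨mem_range_self _, hd0.trans_lt hq1, q, rfl⟩,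
    fun z hz => ?_, by rw [hhd]; exact hq3.le⟩
  have := hx z hz
  have := dist_triangle z x (TopologicalSpace.denseSeq Z n)
  simp only [Metric.mem_ball]
  linarith

theorem ball_cover (G : Gg h) {X : Set Z} {a : ℝ≥0∞} (ha : Hd h 1 X < a) :
    ∃ p : ℕ → Z × ℝ, (∀ n, p n ∈ BB Z) ∧ X ⊆ ⋃ n, Metric.ball (p n).1 (p n).2 ∧
      ∑' n, hr h (p n).2 < a := by
  obtain ⟨U, hU, hd, hs⟩ := Hd_cover G ha
  have hfin : ∑' n, h (Metric.ediam (U n)).toNNReal ≠ ⊤ := hs.ne_top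
  obtain ⟨ε, hε0, hε⟩ := ENNReal.exists_pos_sum_of_countable' (tsub_pos_of_lt hs).ne' ℕ
  have := fun n => ball_of_set G (U := U n)
    (ne_top_of_le_ne_top ENNReal.ofReal_ne_top (hd n)) (hε0 n) (ENNReal.ne_top_of_tsum_ne_top hfin n)
  choose p hp hUp hh using this
  refine ⟨p, hp, hU.trans (iUnion_mono hUp), ?_⟩
  calc ∑' n, hr h (p n).2 ≤ ∑' n, (h (Metric.ediam (U n)).toNNReal + ε n) :=
        ENNReal.tsum_le_tsum hh
    _ = ∑' n, h (Metric.ediam (U n)).toNNReal + ∑' n, ε n := ENNReal.tsum_add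
    _ < a := by
      rw [add_comm]; exact lt_tsub_iff_right.1 hε

end balls
end S5
namespace S5
section vb
variable {Z : Type*} [MetricSpace Z] {h : ℝ≥0 → ℝ≥0∞}

/-- non-conflict -/
def NC (p q : Z × ℝ) : Prop := ∀ (y : Z) (ρ : ℝ), ρ ≤ max p.2 q.2 →
  (Metric.closedBall y ρ ∩ cb p).Nonempty → (Metric.closedBall y ρ ∩ cb q).Nonempty → False

/-- double enlargement -/
def D2 (δ0 : ℝ) (Dom : Z × ℝ → Z × ℝ → Prop) (q : Z × ℝ) : Set Z :=
  {z | ∃ p p' s : Z × ℝ, (0 < p.2 ∧ p.2 ≤ δ0) ∧ (0 < p'.2 ∧ p'.2 ≤ δ0) ∧ (0 < s.2 ∧ s.2 ≤ δ0) ∧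
    z ∈ cb p ∧ Dom p p' ∧ p'.2 ≤ s.2 ∧ (cb p' ∩ cb s).Nonempty ∧ Dom s q}

/-- Vitali black box -/
structure VB (h : ℝ≥0 → ℝ≥0∞) (C : ℝ≥0∞) (δ0 : ℝ) (Dom : Z × ℝ → Z × ℝ → Prop) : Prop where
  C1 : 1 ≤ C
  Ct : C ≠ ⊤
  δ0pos : 0 < δ0
  δ0fin : hr h δ0 ≠ ⊤
  rfl : ∀ p : Z × ℝ, 0 < p.2 → p.2 ≤ δ0 → Dom p p
  vit : ∀ t : Set (Z × ℝ), (∀ p ∈ t, 0 < p.2 ∧ p.2 ≤ δ0) → ∃ u ⊆ t,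
    (∀ p ∈ u, ∀ q ∈ u, p ≠ q → NC p q) ∧ ∀ p ∈ t, ∃ q ∈ u, Dom p q
  enl : ∀ q : Z × ℝ, 0 < q.2 → q.2 ≤ δ0 → Hd h 1 (D2 δ0 Dom q) ≤ C * hr h q.2

theorem ediam_cb (x : Z) {r : ℝ} (_hr0 : 0 ≤ r) :
    Metric.ediam (Metric.closedBall x r) ≤ ENNReal.ofReal (2 * r) := by
  refine Metric.ediam_le fun a ha b hb => ?_
  rw [edist_dist]
  apply ENNReal.ofReal_le_ofReal
  have := dist_triangle_right a b x
  simp only [Metric.mem_closedBall] at ha hb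
  linarith

/-- domination, metric case -/
def DomM (p q : Z × ℝ) : Prop := p.2 ≤ 2 * q.2 ∧ dist p.1 q.1 ≤ 4 * p.2 + 4 * q.2

theorem vitM (δ0 : ℝ) (t : Set (Z × ℝ)) (ht : ∀ p ∈ t, 0 < p.2 ∧ p.2 ≤ δ0) : ∃ u ⊆ t,
    (∀ p ∈ u, ∀ q ∈ u, p ≠ q → NC p q) ∧ ∀ p ∈ t, ∃ q ∈ u, DomM p q := by
  obtain ⟨u, hut, hdis, hcov⟩ := Vitali.exists_disjoint_subfamily_covering_enlargement
    (fun p : Z × ℝ => Metric.closedBall p.1 (4 * p.2)) t (fun p => p.2) 2 (by norm_num)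
    (fun p hp => (ht p hp).1.le) δ0 (fun p hp => (ht p hp).2)
    (fun p hp => Metric.nonempty_closedBall.2 (by have := (ht p hp).1; linarith))
  have aux : ∀ p ∈ u, ∀ q ∈ u, p ≠ q → q.2 ≤ p.2 → ∀ (y : Z) (ρ : ℝ), ρ ≤ p.2 →
      (Metric.closedBall y ρ ∩ cb p).Nonempty → (Metric.closedBall y ρ ∩ cb q).Nonempty → False := by
    rintro p hp q hq hpq hle y ρ hρ ⟨a, ha1, ha2⟩ ⟨b, hb1, hb2⟩
    have hd := Set.disjoint_left.1 (hdis hp hq hpq)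
    have hq0 := (ht q (hut hq)).1
    simp only [Metric.mem_closedBall] at ha1 ha2 hb1 hb2
    refine @hd q.1 ?_ (Metric.mem_closedBall_self (by linarith))
    simp only [Metric.mem_closedBall]
    have h1 := dist_triangle q.1 b p.1
    have h2 := dist_triangle b y p.1
    have h3 := dist_triangle y a p.1
    rw [dist_comm] at ha1 hb2
    linarith
  refine ⟨u, hut, fun p hp q hq hpq y ρ hρ h1 h2 => ?_, fun p hp => ?_⟩
  · rcases le_total q.2 p.2 with hle | hle
    · exact aux p hp q hq hpq hle y ρ (by rwa [max_eq_left hle] at hρ) h1 h2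
    · exact aux q hq p hp hpq.symm hle y ρ (by rwa [max_eq_right hle] at hρ) h2 h1
  · obtain ⟨q, hq, ⟨z, hz1, hz2⟩, hle⟩ := hcov p hp
    refine ⟨q, hq, hle, ?_⟩
    simp only [Metric.mem_closedBall] at hz1 hz2
    have := dist_triangle_left p.1 q.1 z
    linarith

theorem D2M (δ0 : ℝ) (q : Z × ℝ) : D2 δ0 DomM q ⊆ Metric.closedBall q.1 (44 * q.2) := by
  rintro z ⟨p, p', s, hp, hp', hs, hz, ⟨a1, a2⟩, hle, ⟨w, hw1, hw2⟩, b1, b2⟩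
  simp only [Metric.mem_closedBall] at *
  have h1 := dist_triangle z p.1 q.1
  have h2 := dist_triangle p.1 p'.1 q.1
  have h3 := dist_triangle p'.1 s.1 q.1
  have h4 := dist_triangle_left p'.1 s.1 w
  linarith

theorem vb_mk_M (G : Gg h) {C : ℝ≥0∞} (hC1 : 1 ≤ C) (hCt : C ≠ ⊤) {δ1 : ℝ} (hδ1 : 0 < δ1)
    (henl : ∀ (x : Z) (r : ℝ), 0 < r → r ≤ δ1 → Hd h 1 (Metric.closedBall x (44 * r)) ≤ C * hr h r) :
    ∃ (C : ℝ≥0∞) (δ0 : ℝ) (Dom : Z × ℝ → Z × ℝ → Prop), VB h C δ0 Dom := by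
  obtain ⟨δ, hδ, hδ1, hfin⟩ := hr_small G (a := ⊤) (by simp) hδ1
  refine ⟨C, δ, DomM, hC1, hCt, hδ, hfin.ne, fun p h1 h2 => ⟨by linarith, by simp; linarith⟩,
    vitM δ, fun q h1 h2 => (measure_mono (D2M δ q)).trans (henl q.1 q.2 h1 (h2.trans hδ1))⟩

theorem vb_a (G : Gg h) (hfo : FiniteOrder h) :
    ∃ (C : ℝ≥0∞) (δ0 : ℝ) (Dom : Z × ℝ → Z × ℝ → Prop), VB h C δ0 Dom := by
  obtain ⟨C0, hC0, hC0t⟩ := exists_between (show _ < _ from hfo)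
  have h1 := Filter.eventually_lt_of_limsup_lt hC0
  obtain ⟨b, hb, hb2⟩ := (mem_nhdsGT_iff_exists_Ioo_subset).1 h1
  have hb0 : (0 : ℝ≥0) < b := hb
  have h3 : ∀ t : ℝ≥0, 0 < t → t < b → h (3 * t) ≤ C0 * h t := by
    intro t ht htb
    have h4 : h (3 * t) / h t < C0 := hb2 ⟨ht, htb⟩
    by_cases hT : h t = ⊤
    · have : C0 ≠ 0 := by rintro rfl; simp at h4
      rw [hT, ENNReal.mul_top this]; exact le_top
    · exact (ENNReal.div_le_iff (G.pos t ht).ne' hT).1 h4.le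
  have hb243 : (0 : ℝ) < b / 243 := by
    have : (0 : ℝ) < b := by exact_mod_cast hb0
    positivity
  refine vb_mk_M G (C := max 1 (C0 ^ 5)) (le_max_left _ _)
    (by simp [hC0t.ne]) (δ1 := min (1 / 88) (b / 243)) (lt_min (by norm_num) hb243) ?_
  intro x r hr0 hr1
  have hr88 : r ≤ 1 / 88 := hr1.trans (min_le_left _ _)
  have hrb : r ≤ b / 243 := hr1.trans (min_le_right _ _)
  have step1 : Hd h 1 (Metric.closedBall x (44 * r)) ≤ hr h (88 * r) := by
    refine Hd_le_hr G ((ediam_cb x (by linarith)).trans (ENNReal.ofReal_le_ofReal (by linarith))) ?_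
    linarith
  lift r to ℝ≥0 using hr0.le
  have hr0' : 0 < r := by exact_mod_cast hr0
  have hrb' : 243 * r ≤ b := by
    have : (243 : ℝ) * r ≤ b := by linarith
    exact_mod_cast this
  have hrb'' : (243 : ℝ) * r ≤ b := by exact_mod_cast hrb'
  have hlt : ∀ k : ℝ≥0, (k : ℝ) ≤ 81 → k * r < b := by
    intro k hk
    rw [← NNReal.coe_lt_coe]; push_cast; nlinarith
  have e : h (243 * r) ≤ C0 ^ 5 * h r := by
    have q1 := h3 r hr0' (by simpa using hlt 1 (by norm_num))
    have q2 := h3 (3 * r) (by positivity) (hlt 3 (by norm_num))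
    have q3 := h3 (9 * r) (by positivity) (hlt 9 (by norm_num))
    have q4 := h3 (27 * r) (by positivity) (hlt 27 (by norm_num))
    have q5 := h3 (81 * r) (by positivity) (hlt 81 (by norm_num))
    rw [← mul_assoc] at q2 q3 q4 q5
    norm_num at q2 q3 q4 q5
    calc h (243 * r) ≤ C0 * (C0 * (C0 * (C0 * (C0 * h r)))) := by
          refine q5.trans (mul_le_mul_right (q4.trans (mul_le_mul_right (q3.trans
            (mul_le_mul_right (q2.trans (mul_le_mul_right q1 _)) _)) _)) _)
      _ = C0 ^ 5 * h r := by ring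
  have e2 : hr h (88 * (r : ℝ)) ≤ h (243 * r) := by
    apply G.mono
    rw [Real.toNNReal_le_iff_le_coe]; push_cast; nlinarith
  calc _ ≤ _ := step1
    _ ≤ _ := e2
    _ ≤ _ := e
    _ ≤ max 1 (C0 ^ 5) * h r := mul_le_mul_left (le_max_right _ _) _
    _ = _ := by simp [hr]

theorem vb_b (G : Gg h) (hfo : FiniteStructuralDim Z) :
    ∃ (C : ℝ≥0∞) (δ0 : ℝ) (Dom : Z × ℝ → Z × ℝ → Prop), VB h C δ0 Dom := by
  obtain ⟨N, δ, hδ, hN⟩ := hfo (1 / 88) (by norm_num)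
  have hδ' : (0 : ℝ) < δ := by exact_mod_cast hδ
  refine vb_mk_M G (C := N + 1) (by simp) (by simp) (δ1 := min 1 (δ / 88))
    (lt_min one_pos (by positivity)) ?_
  intro x r hr0 hr1
  have hr2 : r ≤ δ / 88 := hr1.trans (min_le_right _ _)
  have hr3 : r ≤ 1 := hr1.trans (min_le_left _ _)
  have hd : Metric.ediam (Metric.closedBall x (44 * r)) ≤ ENNReal.ofReal (88 * r) :=
    (ediam_cb x (by linarith)).trans (ENNReal.ofReal_le_ofReal (by linarith))
  obtain ⟨U, hU, hUd⟩ := hN (Metric.closedBall x (44 * r)) (hd.trans (by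
    rw [← ENNReal.ofReal_coe_nnreal]; exact ENNReal.ofReal_le_ofReal (by linarith)))
  have hUd' : ∀ i, Metric.ediam (U i) ≤ ENNReal.ofReal r := by
    intro i
    refine (hUd i).trans ((mul_le_mul_right hd _).trans ?_)
    rw [← ENNReal.ofReal_coe_nnreal, ← ENNReal.ofReal_mul (by positivity)]
    apply ENNReal.ofReal_le_ofReal
    push_cast; linarith
  calc Hd h 1 (Metric.closedBall x (44 * r)) ≤ Hd h 1 (⋃ i, U i) := measure_mono hU
    _ ≤ ∑ i, Hd h 1 (U i) := measure_iUnion_fintype_le _ _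
    _ ≤ ∑ i : Fin N, hr h r := Finset.sum_le_sum fun i _ => Hd_le_hr G (hUd' i) hr3
    _ = N * hr h r := by simp
    _ ≤ (N + 1) * hr h r := mul_le_mul_left (by simp) _

theorem vb_c (G : Gg h) (hu : ∀ x y z : Z, dist x z ≤ max (dist x y) (dist y z)) :
    ∃ (C : ℝ≥0∞) (δ0 : ℝ) (Dom : Z × ℝ → Z × ℝ → Prop), VB h C δ0 Dom := by
  obtain ⟨δ, hδ, hδ1, hfin⟩ := hr_small G (a := ⊤) (by simp) one_pos
  have hfin' : ∀ r ≤ δ, hr h r ≠ ⊤ := fun r hr1 => ne_top_of_le_ne_top hfin.ne (hr_mono G hr1)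
  refine ⟨4, δ, fun p q => hr h p.2 ≤ 2 * hr h q.2 ∧ dist p.1 q.1 ≤ max p.2 q.2, by norm_num,
    by norm_num, hδ, hfin.ne, ?_, ?_, ?_⟩
  · intro p h1 h2
    refine ⟨?_, by simpa using h1.le⟩
    rw [two_mul]; exact le_self_add
  · intro t ht
    obtain ⟨u, hut, hdis, hcov⟩ := Vitali.exists_disjoint_subfamily_covering_enlargement
      (fun p : Z × ℝ => cb p) t (fun p => (hr h p.2).toReal) 2 (by norm_num)
      (fun p hp => ENNReal.toReal_nonneg) (hr h δ).toReal
      (fun p hp => ENNReal.toReal_mono hfin.ne (hr_mono G (ht p hp).2))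
      (fun p hp => Metric.nonempty_closedBall.2 (ht p hp).1.le)
    have aux : ∀ p ∈ u, ∀ q ∈ u, p ≠ q → ∀ (y : Z) (ρ : ℝ), ρ ≤ p.2 →
        (Metric.closedBall y ρ ∩ cb p).Nonempty → (Metric.closedBall y ρ ∩ cb q).Nonempty →
        False := by
      rintro p hp q hq hpq y ρ hρ ⟨a, ha1, ha2⟩ ⟨b, hb1, hb2⟩
      have hd := Set.disjoint_left.1 (hdis hp hq hpq)
      refine @hd b ?_ hb2
      simp only [Metric.mem_closedBall] at *
      have h1 := hu b y p.1
      have h2 := hu y a p.1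
      rw [dist_comm] at ha1
      exact h1.trans (max_le (hb1.trans hρ) (h2.trans (max_le (ha1.trans hρ) ha2)))
    refine ⟨u, hut, fun p hp q hq hpq y ρ hρ h1 h2 => ?_, fun p hp => ?_⟩
    · rcases le_total q.2 p.2 with hle | hle
      · exact aux p hp q hq hpq y ρ (by rwa [max_eq_left hle] at hρ) h1 h2
      · exact aux q hq p hp hpq.symm y ρ (by rwa [max_eq_right hle] at hρ) h2 h1
    · obtain ⟨q, hq, ⟨z, hz1, hz2⟩, hle⟩ := hcov p hp
      refine ⟨q, hq, ?_, ?_⟩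
      · rw [← ENNReal.toReal_le_toReal (hfin' _ (ht p hp).2)
          (ENNReal.mul_ne_top (by norm_num) (hfin' _ (ht q (hut hq)).2)), ENNReal.toReal_mul]
        simpa using hle
      · simp only [Metric.mem_closedBall] at hz1 hz2
        rw [dist_comm] at hz1
        exact (hu p.1 z q.1).trans (max_le_max hz1 hz2)
  · intro q hq0 hqδ
    set E : Set ℝ := {r | 0 ≤ r ∧ r ≤ δ ∧ hr h r ≤ 4 * hr h q.2} with hE
    have hEc : IsClosed E := by
      have : E = Icc 0 δ ∩ (hr h) ⁻¹' (Iic (4 * hr h q.2)) := by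
        ext r; simp [hE, and_assoc]
      rw [this]
      exact isClosed_Icc.inter (isClosed_Iic.preimage (hr_cont G))
    have hEb : BddAbove E := ⟨δ, fun r hr1 => hr1.2.1⟩
    have h4 : ∀ a : ℝ≥0∞, a ≤ 4 * a := fun a => by
      calc a = 1 * a := (one_mul a).symm
        _ ≤ 4 * a := mul_le_mul_left (by norm_num) _
    have hqE : q.2 ∈ E := ⟨hq0.le, hqδ, h4 _⟩
    have hsE : sSup E ∈ E := hEc.csSup_mem ⟨_, hqE⟩ hEb
    set r := sSup E
    refine le_trans ?_ hsE.2.2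
    refine Hd_le_hr G (Metric.ediam_le ?_) (hsE.2.1.trans hδ1)
    have hz : ∀ z ∈ D2 δ (fun p q : Z × ℝ => hr h p.2 ≤ 2 * hr h q.2 ∧
        dist p.1 q.1 ≤ max p.2 q.2) q, dist z q.1 ≤ r := by
      rintro z ⟨p, p', s, hp, hp', hs, hz, ⟨a1, a2⟩, hle, ⟨w, hw1, hw2⟩, b1, b2⟩
      have hs2 : hr h s.2 ≤ 4 * hr h q.2 := b1.trans (mul_le_mul_left (by norm_num) _)
      have hps := hr_mono G hle
      have hp1 : hr h p.2 ≤ 4 * hr h q.2 := by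
        calc hr h p.2 ≤ 2 * (2 * hr h q.2) := a1.trans (mul_le_mul_right (hps.trans b1) _)
          _ = 4 * hr h q.2 := by rw [← mul_assoc]; norm_num
      have k1 : p.2 ≤ r := le_csSup hEb ⟨hp.1.le, hp.2, hp1⟩
      have k2 : p'.2 ≤ r := le_csSup hEb ⟨hp'.1.le, hp'.2, hps.trans hs2⟩
      have k3 : s.2 ≤ r := le_csSup hEb ⟨hs.1.le, hs.2, hs2⟩
      have k4 : q.2 ≤ r := le_csSup hEb hqE
      simp only [Metric.mem_closedBall] at *
      have h1 := hu z p.1 q.1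
      have h2 := hu p.1 p'.1 q.1
      have h3 := hu p'.1 w q.1
      have h5 := hu w s.1 q.1
      rw [dist_comm] at hw1
      have m1 := max_le k1 k2
      have m2 := max_le k3 k4
      exact h1.trans (max_le (hz.trans k1) (h2.trans (max_le (a2.trans m1) (h3.trans
        (max_le (hw1.trans k2) (h5.trans (max_le (hw2.trans k3) (b2.trans m2))))))))
    intro a ha b hb
    rw [edist_dist]
    apply ENNReal.ofReal_le_ofReal
    have := hz b hb
    rw [dist_comm] at this
    exact (hu a q.1 b).trans (max_le (hz a ha) this)

theorem vb_exists {Y : Set Z} (hP : PropertyH Y h) : Gg h ∧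
    ∃ (C : ℝ≥0∞) (δ0 : ℝ) (Dom : Z × ℝ → Z × ℝ → Prop), VB h C δ0 Dom := by
  have G : Gg h := ⟨hP.hausdorff.mono, hP.cont, hP.zero, hP.hausdorff.pos⟩
  refine ⟨G, ?_⟩
  rcases hP.alt with ha | hb | hc
  · exact vb_a G ha
  · exact vb_b G hb
  · exact vb_c G hc

end vb
end S5
namespace S5
section greedy
variable {Z : Type*} [MetricSpace Z] {h : ℝ≥0 → ℝ≥0∞} {C : ℝ≥0∞} {δ0 : ℝ}
  {Dom : Z × ℝ → Z × ℝ → Prop}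

/-- `p` is a small ball touching `s` -/
def tch (s p : Z × ℝ) : Prop := p.2 ≤ s.2 ∧ (cb p ∩ cb s).Nonempty

/-- pairwise non-conflict -/
def NCs (u : Set (Z × ℝ)) : Prop := ∀ p ∈ u, ∀ q ∈ u, p ≠ q → NC p q

open Classical in
/-- Frostman condition -/
def FrostF (h : ℝ≥0 → ℝ≥0∞) (A : ℝ≥0∞) (J : Finset (Z × ℝ)) : Prop :=
  ∀ s : Z × ℝ, 0 < s.2 → ∑ p ∈ J.filter (tch s), hr h p.2 ≤ A * hr h s.2

theorem cov_le (G : Gg h) (M : OuterMeasure Z) {I : Set (Z × ℝ)} {D : Z × ℝ → Set Z}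
    (hpos : ∀ q ∈ I, 0 < q.2) {K C : ℝ≥0∞} (hK : K ≠ ⊤)
    (hD : ∀ q ∈ I, M (D q) ≤ C * hr h q.2)
    (hsum : ∀ J : Finset (Z × ℝ), (J : Set (Z × ℝ)) ⊆ I → ∑ q ∈ J, hr h q.2 ≤ K) :
    M (⋃ q ∈ I, D q) ≤ C * K := by
  have h1 : ∑' q : I, hr h (q : Z × ℝ).2 ≤ K := by
    rw [ENNReal.tsum_eq_iSup_sum]
    refine iSup_le fun J => ?_
    have := hsum (J.map (Function.Embedding.subtype _)) (by
      intro x hx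
      simp only [Finset.coe_map, mem_image] at hx
      obtain ⟨y, _, rfl⟩ := hx
      exact y.2)
    simpa using this
  have hc : I.Countable := by
    have h2 := Summable.countable_support_ennreal (ne_top_of_le_ne_top hK h1)
    have h3 : (Function.support fun q : I => hr h (q : Z × ℝ).2) = univ := by
      ext q; simp [(hr_pos G (hpos q q.2)).ne']
    rw [h3] at h2
    exact countable_coe_iff.1 (countable_univ_iff.1 h2)
  calc M (⋃ q ∈ I, D q) ≤ ∑' q : I, M (D q) := measure_biUnion_le M hc D
    _ ≤ ∑' q : I, C * hr h (q : Z × ℝ).2 := ENNReal.tsum_le_tsum fun q => hD q q.2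
    _ = C * ∑' q : I, hr h (q : Z × ℝ).2 := ENNReal.tsum_mul_left
    _ ≤ C * K := mul_le_mul_right h1 _

theorem greedy (G : Gg h) (V : VB h C δ0 Dom) {t : Set (Z × ℝ)} {δ' δ : ℝ} {τ : ℝ≥0∞}
    (ht : ∀ p ∈ t, 0 < p.2 ∧ p.2 ≤ δ') (hδ' : δ' ≤ δ0) (hτ : τ ≤ hr h δ0)
    (hsmall : C * hr h δ' < hr h δ)
    (hI : ∀ I : Finset (Z × ℝ), (I : Set (Z × ℝ)) ⊆ t → NCs (I : Set (Z × ℝ)) →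
      FrostF h (4 * C + 1) I → ∑ p ∈ I, hr h p.2 < τ) :
    ∃ T W : Set Z, (∀ p ∈ t, cb p ⊆ T ∪ W) ∧ Hd h δ T ≤ C * τ ∧ 4 * Hd h 1 W ≤ τ := by
  classical
  have hτt : τ ≠ ⊤ := ne_top_of_le_ne_top V.δ0fin hτ
  obtain ⟨u, hut, hunc, hudom⟩ := V.vit t fun p hp => ⟨(ht p hp).1, (ht p hp).2.trans hδ'⟩
  obtain ⟨I, -, hImax⟩ := zorn_subset_nonempty
    {I : Set (Z × ℝ) | I ⊆ u ∧ ∀ J : Finset (Z × ℝ), (J : Set (Z × ℝ)) ⊆ I →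
      FrostF h (4 * C + 1) J} (by
      intro c hc hch hne
      refine ⟨⋃₀ c, ⟨sUnion_subset fun s hs => (hc hs).1, fun J hJ => ?_⟩,
        fun s hs => subset_sUnion_of_mem hs⟩
      rw [sUnion_eq_biUnion] at hJ
      obtain ⟨i, hic, hi⟩ := DirectedOn.exists_mem_subset_of_finset_subset_biUnion hne
        (f := fun i => i) hch.directedOn hJ
      exact (hc hic).2 J hi) ∅ ⟨empty_subset _, fun J hJ => by
        have : J = ∅ := by simpa using hJ
        subst this
        intro s _; simp⟩
  have hIu : I ⊆ u := hImax.prop.1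
  have hIF := hImax.prop.2
  have hIsum : ∀ J : Finset (Z × ℝ), (J : Set (Z × ℝ)) ⊆ I → ∑ q ∈ J, hr h q.2 < τ := by
    intro J hJ
    exact hI J (hJ.trans (hIu.trans hut))
      (fun p hp q hq => hunc p (hIu (hJ hp)) q (hIu (hJ hq))) (hIF J hJ)
  have hC0 : C ≠ 0 := (zero_lt_one.trans_le V.C1).ne'
  set t2 : Set (Z × ℝ) := {s | (0 < s.2 ∧ s.2 ≤ δ0) ∧ ∃ J : Finset (Z × ℝ),
    (J : Set (Z × ℝ)) ⊆ I ∧ (∀ p ∈ J, tch s p) ∧ 4 * C * hr h s.2 ≤ ∑ p ∈ J, hr h p.2} with ht2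
  have hex : ∀ p' ∈ u, p' ∉ I → ∃ s ∈ t2, tch s p' := by
    intro p' hp' hp'I
    have hnot : ¬ (insert p' I ∈ {I : Set (Z × ℝ) | I ⊆ u ∧ ∀ J : Finset (Z × ℝ),
        (J : Set (Z × ℝ)) ⊆ I → FrostF h (4 * C + 1) J}) := by
      intro hmem
      exact hp'I (hImax.le_of_ge hmem (subset_insert _ _) (mem_insert _ _))
    have : ∃ J : Finset (Z × ℝ), (J : Set (Z × ℝ)) ⊆ insert p' I ∧ ¬ FrostF h (4 * C + 1) J := by
      by_contra hcon
      push Not at hcon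
      exact hnot ⟨insert_subset hp' hIu, hcon⟩
    obtain ⟨J, hJ, hJF⟩ := this
    rw [FrostF] at hJF
    push Not at hJF
    obtain ⟨s, hs0, hs⟩ := hJF
    have hJ' : ((J.erase p' : Finset (Z × ℝ)) : Set (Z × ℝ)) ⊆ I := by
      intro x hx
      simp only [Finset.coe_erase, Set.mem_sdiff, mem_singleton_iff] at hx
      exact (hJ hx.1).resolve_left hx.2
    have hJ2 : ((Finset.filter (tch s) (J.erase p') : Finset (Z × ℝ)) : Set (Z × ℝ)) ⊆ I :=
      fun x hx => hJ' (by
        have := Finset.mem_coe.1 hx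
        exact Finset.mem_coe.2 (Finset.filter_subset _ _ this))
    have htp : tch s p' := by
      by_contra hnt
      have h2 : ∑ p ∈ J.filter (tch s), hr h p.2 ≤ ∑ p ∈ (J.erase p').filter (tch s), hr h p.2 := by
        apply Finset.sum_le_sum_of_subset
        intro x hx
        rw [Finset.mem_filter] at hx
        rw [Finset.mem_filter, Finset.mem_erase]
        exact ⟨⟨fun he => hnt (he ▸ hx.2), hx.1⟩, hx.2⟩
      exact absurd ((hs.trans_le h2).trans_le (hIF _ hJ' s hs0)) (lt_irrefl _)
    have hsA : hr h s.2 ≠ ⊤ := by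
      intro htop
      rw [htop, ENNReal.mul_top (by simp)] at hs
      simp at hs
    have hlt : 4 * C * hr h s.2 ≤ ∑ p ∈ (J.erase p').filter (tch s), hr h p.2 := by
      have h2 : ∑ p ∈ J.filter (tch s), hr h p.2 ≤
          hr h p'.2 + ∑ p ∈ (J.erase p').filter (tch s), hr h p.2 := by
        rw [← Finset.sum_insert (a := p') (f := fun p => hr h p.2) (by simp)]
        apply Finset.sum_le_sum_of_subset
        intro x hx
        rw [Finset.mem_filter] at hx
        rw [Finset.mem_insert, Finset.mem_filter, Finset.mem_erase]
        by_cases hxp : x = p'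
        · exact Or.inl hxp
        · exact Or.inr ⟨⟨hxp, hx.1⟩, hx.2⟩
      have h3 := (hs.trans_le h2).trans_le (add_le_add_left (hr_mono G htp.1) _)
      rw [add_mul, one_mul, add_comm] at h3
      exact (ENNReal.add_lt_add_iff_left hsA).1 h3 |>.le
    have hsδ : s.2 ≤ δ0 := by
      by_contra hcon
      push Not at hcon
      have h4 : hr h δ0 ≤ 4 * C * hr h s.2 := by
        calc hr h δ0 ≤ 1 * hr h s.2 := by rw [one_mul]; exact hr_mono G hcon.le
          _ ≤ 4 * C * hr h s.2 := by
            refine mul_le_mul_left ?_ _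
            calc (1 : ℝ≥0∞) ≤ 4 * 1 := by norm_num
              _ ≤ 4 * C := mul_le_mul_right V.C1 _
      exact absurd ((h4.trans hlt).trans_lt ((hIsum _ hJ2).trans_le hτ)) (lt_irrefl _)
    exact ⟨s, ⟨⟨hs0, hsδ⟩, _, hJ2, fun p hp => (Finset.mem_filter.1 hp).2, hlt⟩, htp⟩
  obtain ⟨u2, hu2t, hu2nc, hu2dom⟩ := V.vit t2 fun p hp => hp.1
  have hJx : ∀ s : Z × ℝ, ∃ J : Finset (Z × ℝ), s ∈ u2 → ((J : Set (Z × ℝ)) ⊆ I ∧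
      (∀ p ∈ J, tch s p) ∧ 4 * C * hr h s.2 ≤ ∑ p ∈ J, hr h p.2) := by
    intro s
    by_cases hs : s ∈ u2
    · obtain ⟨J, hJ⟩ := (hu2t hs).2
      exact ⟨J, fun _ => hJ⟩
    · exact ⟨∅, fun h => absurd h hs⟩
  choose Jf hJf using hJx
  have hu2sum : ∀ F : Finset (Z × ℝ), (F : Set (Z × ℝ)) ⊆ u2 →
      ∑ q ∈ F, hr h q.2 ≤ τ / (4 * C) := by
    intro F hF
    rw [ENNReal.le_div_iff_mul_le (Or.inl (by simp [hC0])) (Or.inl (ENNReal.mul_ne_top (by norm_num) V.Ct))]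
    calc (∑ q ∈ F, hr h q.2) * (4 * C) = ∑ q ∈ F, 4 * C * hr h q.2 := by
          rw [mul_comm, Finset.mul_sum]
      _ ≤ ∑ q ∈ F, ∑ p ∈ Jf q, hr h p.2 := Finset.sum_le_sum fun q hq => (hJf q (hF hq)).2.2
      _ = ∑ p ∈ F.biUnion Jf, hr h p.2 := by
          rw [Finset.sum_biUnion]
          intro a ha b hb hab
          rw [Function.onFun, Finset.disjoint_left]
          intro p hpa hpb
          have k1 := (hJf a (hF ha)).2.1 p hpa
          have k2 := (hJf b (hF hb)).2.1 p hpb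
          exact hu2nc a (hF ha) b (hF hb) hab p.1 p.2 (k1.1.trans (le_max_left _ _)) k1.2 k2.2
      _ ≤ τ := by
          refine (hIsum _ ?_).le
          intro p hp
          simp only [Finset.coe_biUnion, mem_iUnion] at hp
          obtain ⟨q, hq, hp⟩ := hp
          exact (hJf q (hF hq)).1 hp
  have hrad : ∀ q ∈ I, 0 < q.2 ∧ q.2 ≤ δ' := fun q hq => ht q (hut (hIu hq))
  refine ⟨⋃ q ∈ I, D2 δ0 Dom q, ⋃ q ∈ u2, D2 δ0 Dom q, ?_, ?_, ?_⟩
  · intro p hp z hz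
    obtain ⟨p', hp'u, hd⟩ := hudom p hp
    have hpr : 0 < p.2 ∧ p.2 ≤ δ0 := ⟨(ht p hp).1, (ht p hp).2.trans hδ'⟩
    have hp'r : 0 < p'.2 ∧ p'.2 ≤ δ0 := ⟨(ht p' (hut hp'u)).1, (ht p' (hut hp'u)).2.trans hδ'⟩
    by_cases hp'I : p' ∈ I
    · left
      refine mem_biUnion hp'I ⟨p, p', p', hpr, hp'r, hp'r, hz, hd, le_rfl, ?_,
        V.rfl p' hp'r.1 hp'r.2⟩
      exact ⟨p'.1, Metric.mem_closedBall_self hp'r.1.le, Metric.mem_closedBall_self hp'r.1.le⟩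
    · right
      obtain ⟨s, hs, hts⟩ := hex p' hp'u hp'I
      obtain ⟨q, hq, hsq⟩ := hu2dom s hs
      exact mem_biUnion hq ⟨p, p', s, hpr, hp'r, hs.1, hz, hd, hts.1, hts.2, hsq⟩
  · refine cov_le G _ (fun q hq => (hrad q hq).1) hτt (fun q hq => ?_) fun J hJ => (hIsum J hJ).le
    have h1 := V.enl q (hrad q hq).1 ((hrad q hq).2.trans hδ')
    refine (Hd_L1 G ?_).trans h1
    exact (h1.trans (mul_le_mul_right (hr_mono G (hrad q hq).2) _)).trans_lt hsmall
  · have h1 := cov_le G (Hd h 1) (I := u2) (D := D2 δ0 Dom) (fun q hq => (hu2t hq).1.1)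
      (ENNReal.div_ne_top hτt (by simp [hC0])) (fun q hq => V.enl q (hu2t hq).1.1 (hu2t hq).1.2) hu2sum
    calc 4 * _ ≤ 4 * (C * (τ / (4 * C))) := mul_le_mul_right h1 _
      _ = (4 * C) * (τ / (4 * C)) := by rw [mul_assoc]
      _ ≤ τ := ENNReal.mul_div_le

/-- rich sets -/
def Rich (h : ℝ≥0 → ℝ≥0∞) (A : ℝ≥0∞) (S : Set Z) (q : ℝ) : Prop :=
  ∀ Q : Set Z, SF h Q → ∀ t : Set (Z × ℝ), (∀ p ∈ t, 0 < p.2) →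
    (∀ x ∈ S \ Q, ∀ δ : ℝ, 0 < δ → ∃ p ∈ t, p.2 < δ ∧ x ∈ cb p) →
    ∃ I : Finset (Z × ℝ), (I : Set (Z × ℝ)) ⊆ t ∧ NCs (I : Set (Z × ℝ)) ∧ FrostF h A I ∧
      hr h q ≤ ∑ p ∈ I, hr h p.2

theorem Rich.nonempty (G : Gg h) {A : ℝ≥0∞} {S : Set Z} {q : ℝ} (hR : Rich h A S q) (hq : 0 < q) :
    S.Nonempty := by
  by_contra hS
  rw [not_nonempty_iff_eq_empty] at hS
  obtain ⟨I, hI, _, _, h1⟩ := hR ∅ SF_empty ∅ (by simp) (by simp [hS])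
  have : I = ∅ := by simpa using hI
  subst this
  simp only [Finset.sum_empty, nonpos_iff_eq_zero] at h1
  exact (hr_pos G hq).ne' h1

variable [TopologicalSpace.SeparableSpace Z] [Nonempty Z]

theorem BB_fine (x : Z) {δ : ℝ} (hδ : 0 < δ) : ∃ p ∈ BB Z, p.2 < δ ∧ x ∈ cb p := by
  obtain ⟨q, hq1, hq2⟩ := exists_rat_btwn hδ
  obtain ⟨n, hn⟩ := (TopologicalSpace.denseRange_denseSeq Z).exists_dist_lt x hq1
  exact ⟨(TopologicalSpace.denseSeq Z n, (q : ℝ)), ⟨mem_range_self _, hq1, q, rfl⟩, hq2, hn.le⟩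

/-- bad points -/
def Bd (h : ℝ≥0 → ℝ≥0∞) (A : ℝ≥0∞) (S : Set Z) : Set Z :=
  {x | x ∈ S ∧ ∃ j : ℕ, ∀ p ∈ BB Z, p.2 < 1 / ((j : ℝ) + 1) → x ∈ cb p → ¬ Rich h A (S ∩ cb p) p.2}

theorem bad_aux (G : Gg h) {C : ℝ≥0∞} {P : Set Z} {R0 δ : ℝ} (hRf : hr h R0 ≠ ⊤)
    (hloc : ∀ p ∈ BB Z, p.2 < R0 → ∃ T W : Set Z, P ∩ cb p ⊆ T ∪ W ∧
      Hd h δ T ≤ C * hr h p.2 ∧ 4 * Hd h 1 W ≤ hr h p.2) (n : ℕ) :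
    ∀ (a : ℝ≥0∞) (X : Set Z), 0 < a → 2 * a ≤ hr h R0 → a < 2 ^ n * hr h δ → Hd h 1 X ≤ a →
      Hd h δ (P ∩ X) ≤ (4 * C + 1) * a := by
  induction n with
  | zero =>
    intro a X ha0 haR han hX
    have h1 : Hd h 1 (P ∩ X) ≤ a := (measure_mono inter_subset_right).trans hX
    calc Hd h δ (P ∩ X) ≤ Hd h 1 (P ∩ X) := Hd_L1 G (h1.trans_lt (by simpa using han))
      _ ≤ 1 * a := by rw [one_mul]; exact h1
      _ ≤ (4 * C + 1) * a := mul_le_mul_left le_add_self _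
  | succ n ih =>
    intro a X ha0 haR han hX
    have hat : a ≠ ⊤ := by
      rintro rfl; simp at haR; exact hRf haR
    have hlt : Hd h 1 X < 2 * a := by
      refine hX.trans_lt ?_
      rw [two_mul]; exact ENNReal.lt_add_right hat ha0.ne'
    obtain ⟨p, hpB, hpX, hps⟩ := ball_cover G hlt
    have hpR : ∀ n, (p n).2 < R0 := by
      intro n
      by_contra hcon
      push Not at hcon
      have := (hr_mono G hcon).trans (ENNReal.le_tsum (f := fun n => hr h (p n).2) n)
      exact absurd (this.trans_lt (hps.trans_le haR)) (lt_irrefl _)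
    choose T W hTW hT hW using fun n => hloc (p n) (hpB n) (hpR n)
    set b := a / 2 with hb
    have hab : a = b + b := (ENNReal.add_halves a).symm
    have hW' : Hd h 1 (⋃ n, W n) ≤ b := by
      have h4 : 4 * Hd h 1 (⋃ n, W n) ≤ 4 * b := by
        calc 4 * Hd h 1 (⋃ n, W n) ≤ 4 * ∑' n, Hd h 1 (W n) :=
              mul_le_mul_right (measure_iUnion_le _) _
          _ = ∑' n, 4 * Hd h 1 (W n) := ENNReal.tsum_mul_left.symm
          _ ≤ ∑' n, hr h (p n).2 := ENNReal.tsum_le_tsum hW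
          _ ≤ 2 * a := hps.le
          _ = 4 * b := by rw [hab]; ring
      exact (ENNReal.mul_le_mul_iff_right (by norm_num) (by norm_num)).1 h4
    have hT' : Hd h δ (⋃ n, T n) ≤ C * (4 * b) := by
      calc Hd h δ (⋃ n, T n) ≤ ∑' n, Hd h δ (T n) := measure_iUnion_le _
        _ ≤ ∑' n, C * hr h (p n).2 := ENNReal.tsum_le_tsum hT
        _ = C * ∑' n, hr h (p n).2 := ENNReal.tsum_mul_left
        _ ≤ C * (2 * a) := mul_le_mul_right hps.le _
        _ = C * (4 * b) := by rw [hab]; ring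
    have hb0 : 0 < b := ENNReal.half_pos ha0.ne'
    have hba : b ≤ a := ENNReal.half_le_self
    have hIH := ih b (⋃ n, W n) hb0 ((mul_le_mul_right hba 2).trans haR) (by
      rw [hab, pow_succ, mul_assoc, mul_comm 2, ← mul_assoc, ← mul_two] at han
      exact (ENNReal.mul_lt_mul_iff_left (by norm_num) (by norm_num)).1 han) hW'
    have hsub : P ∩ X ⊆ (⋃ n, T n) ∪ (P ∩ ⋃ n, W n) := by
      rintro x ⟨hxP, hxX⟩
      obtain ⟨n, hn⟩ := mem_iUnion.1 (hpX hxX)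
      rcases hTW n ⟨hxP, Metric.ball_subset_closedBall hn⟩ with h1 | h1
      · exact Or.inl (mem_iUnion.2 ⟨n, h1⟩)
      · exact Or.inr ⟨hxP, mem_iUnion.2 ⟨n, h1⟩⟩
    calc Hd h δ (P ∩ X) ≤ Hd h δ (⋃ n, T n) + Hd h δ (P ∩ ⋃ n, W n) :=
          (measure_mono hsub).trans (measure_union_le _ _)
      _ ≤ C * (4 * b) + (4 * C + 1) * b := add_le_add hT' hIH
      _ ≤ C * (4 * b) + (4 * C + 1) * b + b := le_self_add
      _ = (4 * C + 1) * a := by rw [hab]; ring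

theorem Bd_SF (G : Gg h) (V : VB h C δ0 Dom) (S : Set Z) : SF h (Bd h (4 * C + 1) S) := by
  have hC0 : C ≠ 0 := (zero_lt_one.trans_le V.C1).ne'
  have hch : ∀ p : Z × ℝ, ∃ (Q : Set Z) (t : Set (Z × ℝ)), SF h Q ∧
      (¬ Rich h (4 * C + 1) (S ∩ cb p) p.2 → (∀ p ∈ t, 0 < p.2) ∧
      (∀ x ∈ (S ∩ cb p) \ Q, ∀ δ : ℝ, 0 < δ → ∃ p ∈ t, p.2 < δ ∧ x ∈ cb p) ∧
      ∀ I : Finset (Z × ℝ), (I : Set (Z × ℝ)) ⊆ t → NCs (I : Set (Z × ℝ)) →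
      FrostF h (4 * C + 1) I → ∑ q ∈ I, hr h q.2 < hr h p.2) := by
    intro p
    by_cases hp : Rich h (4 * C + 1) (S ∩ cb p) p.2
    · exact ⟨∅, ∅, SF_empty, fun h => absurd hp h⟩
    · have hp' := hp
      rw [Rich] at hp
      push Not at hp
      obtain ⟨Q, hQ, t, ht, hf, hI⟩ := hp
      exact ⟨Q, t, hQ, fun _ => ⟨ht, hf, hI⟩⟩
  choose Qf tf hQ htf using hch
  set Qs : Set Z := ⋃ p ∈ BB Z, Qf p with hQs
  have hQsSF : SF h Qs := SF_biUnion (BB_countable Z) fun p _ => hQ p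
  set Pj : ℕ → Set Z := fun j => {x | x ∈ S ∧ x ∉ Qs ∧ ∀ p ∈ BB Z, p.2 < 1 / ((j : ℝ) + 1) →
    x ∈ cb p → ¬ Rich h (4 * C + 1) (S ∩ cb p) p.2} with hPj
  have hsub : Bd h (4 * C + 1) S ⊆ Qs ∪ ⋃ j, Pj j := by
    rintro x ⟨hxS, j, hj⟩
    by_cases hx : x ∈ Qs
    · exact Or.inl hx
    · exact Or.inr (mem_iUnion.2 ⟨j, hxS, hx, hj⟩)
  refine SF_mono hsub (SF_union hQsSF (SF_iUnion_nat fun j => ?_))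
  set P := Pj j with hP
  set R0 : ℝ := min (1 / ((j : ℝ) + 1)) δ0 with hR0
  have hR0pos : 0 < R0 := lt_min (by positivity) V.δ0pos
  have hRf : hr h R0 ≠ ⊤ := ne_top_of_le_ne_top V.δ0fin (hr_mono G (min_le_right _ _))
  have hloc : ∀ δ : ℝ, 0 < δ → ∀ p ∈ BB Z, p.2 < R0 → ∃ T W : Set Z, P ∩ cb p ⊆ T ∪ W ∧
      Hd h δ T ≤ C * hr h p.2 ∧ 4 * Hd h 1 W ≤ hr h p.2 := by
    intro δ hδ p hp hpR
    rcases (P ∩ cb p).eq_empty_or_nonempty with he | ⟨x, hxP, hxp⟩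
    · exact ⟨∅, ∅, by simp [he], by simp, by simp⟩
    · have hnr := hxP.2.2 p hp (hpR.trans_le (min_le_left _ _)) hxp
      obtain ⟨ht1, ht2, ht3⟩ := htf p hnr
      obtain ⟨δ', hδ'0, hδ'1, hδ'2⟩ := hr_small G (a := hr h δ / C)
        (ENNReal.div_pos (hr_pos G hδ).ne' V.Ct) V.δ0pos
      obtain ⟨T, W, hc, hT, hW⟩ := greedy G V (t := {q | q ∈ tf p ∧ q.2 ≤ δ'}) (δ' := δ') (δ := δ)
        (τ := hr h p.2) (fun q hq => ⟨ht1 q hq.1, hq.2⟩) hδ'1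
        (hr_mono G (hpR.le.trans (min_le_right _ _)))
        (by rw [mul_comm]; exact (ENNReal.lt_div_iff_mul_lt (Or.inl hC0) (Or.inl V.Ct)).1 hδ'2)
        (fun I hI => ht3 I (hI.trans fun q hq => hq.1))
      refine ⟨T, W, ?_, hT, hW⟩
      rintro y ⟨hyP, hyp⟩
      obtain ⟨q, hqt, hqδ, hyq⟩ := ht2 y ⟨⟨hyP.1, hyp⟩, fun hyQ => hyP.2.1 (mem_biUnion hp hyQ)⟩ δ' hδ'0
      exact hc q ⟨hqt, hqδ.le⟩ hyq
  set a := hr h R0 / 2 with ha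
  have ha0 : 0 < a := ENNReal.half_pos (hr_pos G hR0pos).ne'
  have haR : 2 * a = hr h R0 := ENNReal.mul_div_cancel (by norm_num) (by norm_num)
  have hat : a ≠ ⊤ := by
    intro h1; rw [h1] at haR; simp at haR; exact hRf haR.symm
  have hfin : ∀ X : Set Z, Hd h 1 X ≤ a → hausdorffM h (P ∩ X) < ⊤ := by
    intro X hX
    refine lt_of_le_of_lt (H_le (M := (4 * C + 1) * a) fun δ hδ => ?_)
      (ENNReal.mul_lt_top (by simp [ENNReal.mul_lt_top_iff, V.Ct.lt_top]) hat.lt_top)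
    obtain ⟨n, hn⟩ := ENNReal.exists_nat_mul_gt (hr_pos G hδ).ne' hat
    refine bad_aux G hRf (hloc δ hδ) n a X ha0 haR.le (hn.trans_le (mul_le_mul_left ?_ _)) hX
    exact_mod_cast (Nat.lt_two_pow_self (n := n)).le
  obtain ⟨r1, hr10, hr1δ, hr1⟩ := hr_small G (a := a / C) (ENNReal.div_pos ha0.ne' V.Ct) V.δ0pos
  have hcov : P ⊆ ⋃ p ∈ {p | p ∈ BB Z ∧ p.2 < r1}, P ∩ cb p := by
    intro x hx
    obtain ⟨p, hp, hpr, hxp⟩ := BB_fine x hr10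
    exact mem_biUnion (show p ∈ {p | p ∈ BB Z ∧ p.2 < r1} from ⟨hp, hpr⟩) ⟨hx, hxp⟩
  refine SF_mono hcov (SF_biUnion ((BB_countable Z).mono fun p hp => hp.1) fun p hp => ?_)
  refine SF_of_finite (hfin _ ?_)
  have hp0 : 0 < p.2 := hp.1.2.1
  have hpδ : p.2 ≤ δ0 := hp.2.le.trans hr1δ
  have hsub : cb p ⊆ D2 δ0 Dom p := fun z hz => ⟨p, p, p, ⟨hp0, hpδ⟩, ⟨hp0, hpδ⟩, ⟨hp0, hpδ⟩, hz,
    V.rfl p hp0 hpδ, le_rfl, ⟨z, hz, hz⟩, V.rfl p hp0 hpδ⟩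
  calc Hd h 1 (cb p) ≤ C * hr h p.2 := (measure_mono hsub).trans (V.enl p hp0 hpδ)
    _ ≤ C * hr h r1 := mul_le_mul_right (hr_mono G hp.2.le) _
    _ ≤ C * (a / C) := mul_le_mul_right hr1.le _
    _ ≤ a := ENNReal.mul_div_le

end greedy
end S5
namespace S5
section density
variable {Z : Type*} [MetricSpace Z] {h : ℝ≥0 → ℝ≥0∞} {C : ℝ≥0∞} {δ0 : ℝ}
  {Dom : Z × ℝ → Z × ℝ → Prop} [TopologicalSpace.SeparableSpace Z] [Nonempty Z]

theorem density_aux (G : Gg h) (V : VB h C δ0 Dom) [MeasurableSpace Z] [BorelSpace Z]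
    (m : Measure Z) [IsFiniteMeasure m] {ε : ℝ≥0∞} (hε : ε ≠ 0) (hεt : ε ≠ ⊤) :
    SF h {x : Z | ∀ δ : ℝ, 0 < δ → ∃ p ∈ BB Z, p.2 < δ ∧ x ∈ cb p ∧ ε * hr h p.2 < m (cb p)} := by
  have hC0 : C ≠ 0 := (zero_lt_one.trans_le V.C1).ne'
  have hK : m univ / ε ≠ ⊤ := ENNReal.div_ne_top (measure_ne_top m _) hε
  refine SF_of_finite (lt_of_le_of_lt (H_le (M := C * (m univ / ε)) fun δ hδ => ?_)
    (ENNReal.mul_lt_top V.Ct.lt_top hK.lt_top))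
  obtain ⟨δ', hδ'0, hδ'1, hδ'2⟩ := hr_small G (a := hr h δ / C)
    (ENNReal.div_pos (hr_pos G hδ).ne' V.Ct) V.δ0pos
  have hsmall : C * hr h δ' < hr h δ := by
    rw [mul_comm]; exact (ENNReal.lt_div_iff_mul_lt (Or.inl hC0) (Or.inl V.Ct)).1 hδ'2
  set t : Set (Z × ℝ) := {p | (0 < p.2 ∧ p.2 ≤ δ') ∧ ε * hr h p.2 < m (cb p)} with ht
  obtain ⟨u, hut, hnc, hdom⟩ := V.vit t fun p hp => ⟨hp.1.1, hp.1.2.trans hδ'1⟩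
  have hsub : {x : Z | ∀ δ : ℝ, 0 < δ → ∃ p ∈ BB Z, p.2 < δ ∧ x ∈ cb p ∧
      ε * hr h p.2 < m (cb p)} ⊆ ⋃ q ∈ u, D2 δ0 Dom q := by
    intro x hx
    obtain ⟨p, hpB, hpδ, hxp, hpm⟩ := hx δ' hδ'0
    have hpt : p ∈ t := ⟨⟨hpB.2.1, hpδ.le⟩, hpm⟩
    obtain ⟨q, hq, hpq⟩ := hdom p hpt
    have hpr : 0 < p.2 ∧ p.2 ≤ δ0 := ⟨hpt.1.1, hpt.1.2.trans hδ'1⟩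
    have hqr : 0 < q.2 ∧ q.2 ≤ δ0 := ⟨(hut hq).1.1, (hut hq).1.2.trans hδ'1⟩
    refine mem_biUnion hq ⟨p, q, q, hpr, hqr, hqr, hxp, hpq, le_rfl, ?_, V.rfl q hqr.1 hqr.2⟩
    exact ⟨q.1, Metric.mem_closedBall_self hqr.1.le, Metric.mem_closedBall_self hqr.1.le⟩
  refine (measure_mono hsub).trans (cov_le G _ (fun q hq => (hut hq).1.1) hK (fun q hq => ?_) ?_)
  · have h1 := V.enl q (hut hq).1.1 ((hut hq).1.2.trans hδ'1)
    refine (Hd_L1 G ?_).trans h1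
    exact (h1.trans (mul_le_mul_right (hr_mono G (hut hq).1.2) _)).trans_lt hsmall
  · intro F hF
    rw [ENNReal.le_div_iff_mul_le (Or.inl hε) (Or.inl hεt), mul_comm, Finset.mul_sum]
    calc ∑ q ∈ F, ε * hr h q.2 ≤ ∑ q ∈ F, m (cb q) := Finset.sum_le_sum fun q hq => (hut (hF hq)).2.le
      _ = m (⋃ q ∈ F, cb q) := by
        rw [measure_biUnion_finset]
        · intro p hp q hq hpq
          rw [Function.onFun, Set.disjoint_iff_inter_eq_empty, ← not_nonempty_iff_eq_empty]
          intro hne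
          exact hnc p (hF hp) q (hF hq) hpq p.1 p.2 (le_max_left _ _)
            ⟨p.1, Metric.mem_closedBall_self (hut (hF hp)).1.1.le,
              Metric.mem_closedBall_self (hut (hF hp)).1.1.le⟩ hne
        · exact fun q _ => Metric.isClosed_closedBall.measurableSet
      _ ≤ m univ := measure_mono (subset_univ _)

theorem density (G : Gg h) (V : VB h C δ0 Dom) [MeasurableSpace Z] [BorelSpace Z]
    (m : Measure Z) [IsFiniteMeasure m] :
    ∃ A : Set Z, SF h A ∧ ∀ x ∉ A, ∀ ε : ℝ≥0∞, ε ≠ 0 → ∃ δ : ℝ, 0 < δ ∧ ∀ p ∈ BB Z, p.2 < δ →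
      x ∈ cb p → m (cb p) ≤ ε * hr h p.2 := by
  refine ⟨⋃ i : ℕ, {x : Z | ∀ δ : ℝ, 0 < δ → ∃ p ∈ BB Z, p.2 < δ ∧ x ∈ cb p ∧
    ((i : ℝ≥0∞) + 1)⁻¹ * hr h p.2 < m (cb p)}, SF_iUnion_nat fun i =>
      density_aux G V m (by simp) (by simp), ?_⟩
  intro x hx ε hε
  obtain ⟨n, hn⟩ := ENNReal.exists_inv_nat_lt hε
  simp only [mem_iUnion, mem_ofPred_eq, not_exists] at hx
  have := hx n
  push Not at this
  obtain ⟨δ, hδ, h1⟩ := this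
  refine ⟨δ, hδ, fun p hp hpδ hxp => (h1 p hp hpδ hxp).trans (mul_le_mul_left ?_ _)⟩
  exact (ENNReal.inv_le_inv.2 le_self_add).trans hn.le

end density
end S5
namespace S5

theorem sum_biUnion_le' {α β : Type*} [DecidableEq β] (f : β → ℝ≥0∞) (s : Finset α)
    (t : α → Finset β) : ∑ p ∈ s.biUnion t, f p ≤ ∑ i ∈ s, ∑ p ∈ t i, f p := by
  classical
  induction s using Finset.induction_on with
  | empty => simp
  | insert a s ha ih =>
    rw [Finset.biUnion_insert, Finset.sum_insert ha]
    calc _ ≤ ∑ p ∈ t a ∪ s.biUnion t, f p + ∑ p ∈ t a ∩ s.biUnion t, f p := le_self_add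
      _ = ∑ p ∈ t a, f p + ∑ p ∈ s.biUnion t, f p := Finset.sum_union_inter
      _ ≤ _ := by gcongr

section tree
variable {Z : Type*} [MetricSpace Z] {h : ℝ≥0 → ℝ≥0∞} {C A : ℝ≥0∞} {δ0 : ℝ}
  {Dom : Z × ℝ → Z × ℝ → Prop} [MeasurableSpace Z]
  {g : (ℕ → ℕ) → Z} {m : Measure Z}

/-- good nodes -/
structure Good (h : ℝ≥0 → ℝ≥0∞) (A : ℝ≥0∞) (δ0 : ℝ) (g : (ℕ → ℕ) → Z) (m : Measure Z) (k : ℕ)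
    (n : Set (ℕ → ℕ) × (Z × ℝ)) : Prop where
  pos : 0 < n.2.2
  small : n.2.2 ≤ 1 / ((k : ℝ) + 1)
  le0 : n.2.2 ≤ δ0
  rich : Rich h A (g '' n.1) n.2.2
  sub : g '' n.1 ⊆ cb n.2
  meas : m (cb n.2) ≤ ((2 * A) ^ k)⁻¹ * hr h n.2.2

/-- one step of the construction -/
structure Step (h : ℝ≥0 → ℝ≥0∞) (A : ℝ≥0∞) (δ0 : ℝ) (g : (ℕ → ℕ) → Z) (m : Measure Z) (k : ℕ)
    (n : Set (ℕ → ℕ) × (Z × ℝ)) (I : Finset (Z × ℝ)) (Cf : Z × ℝ → Set (ℕ → ℕ)) : Prop where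
  good : ∀ p ∈ I, Good h A δ0 g m (k + 1) (Cf p, p)
  sub : ∀ p ∈ I, Cf p ⊆ n.1
  lt : ∀ p ∈ I, p.2 ≤ n.2.2
  val : ∀ p ∈ I, ∃ v, ∀ σ ∈ Cf p, σ k = v
  nc : NCs (I : Set (Z × ℝ))
  frost : FrostF h A I
  sum : hr h n.2.2 ≤ ∑ p ∈ I, hr h p.2

section exist
variable [TopologicalSpace.SeparableSpace Z] [Nonempty Z]

theorem not_bad {S : Set Z} {x : Z} (hxS : x ∈ S) (hx : x ∉ Bd h A S) {δ : ℝ} (hδ : 0 < δ) :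
    ∃ p ∈ BB Z, p.2 < δ ∧ x ∈ cb p ∧ Rich h A (S ∩ cb p) p.2 := by
  obtain ⟨j, hj⟩ := exists_nat_one_div_lt hδ
  by_contra hcon
  push Not at hcon
  exact hx ⟨hxS, j, fun p hp hpj hxp => hcon p hp (hpj.trans hj) hxp⟩

theorem step_exists [BorelSpace Z] (G : Gg h) (V : VB h C δ0 Dom) [IsFiniteMeasure m] (k : ℕ)
    (n : Set (ℕ → ℕ) × (Z × ℝ)) (hn : Good h (4 * C + 1) δ0 g m k n) :
    ∃ I Cf, Step h (4 * C + 1) δ0 g m k n I Cf := by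
  obtain ⟨Am, hAm, hd⟩ := density G V m
  set S : ℕ → Set Z := fun v => g '' (n.1 ∩ {σ | σ k = v}) with hS
  set Q : Set Z := (⋃ v, Bd h (4 * C + 1) (S v)) ∪ Am with hQ
  have hQSF : SF h Q := SF_union (SF_iUnion_nat fun v => Bd_SF G V _) hAm
  set εk : ℝ≥0∞ := ((2 * (4 * C + 1)) ^ (k + 1))⁻¹ with hεk
  have hεk0 : εk ≠ 0 := by
    rw [hεk]
    refine ENNReal.inv_ne_zero.2 (ENNReal.pow_ne_top (ENNReal.mul_ne_top (by norm_num) ?_))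
    simp [ENNReal.mul_eq_top, V.Ct]
  set R : ℝ := min n.2.2 (1 / (((k + 1 : ℕ) : ℝ) + 1)) with hR
  have hR0 : 0 < R := lt_min hn.pos (by positivity)
  set t : Set (Z × ℝ) := {p | 0 < p.2 ∧ p.2 ≤ R ∧ m (cb p) ≤ εk * hr h p.2 ∧
    ∃ v, Rich h (4 * C + 1) (S v ∩ cb p) p.2} with ht
  obtain ⟨I, hIt, hnc, hfr, hsum⟩ := hn.rich Q hQSF t (fun p hp => hp.1) (by
    rintro x ⟨⟨σ, hσ, rfl⟩, hxQ⟩ δ hδ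
    have hx1 : g σ ∉ Bd h (4 * C + 1) (S (σ k)) := fun hb => hxQ (Or.inl (mem_iUnion.2 ⟨_, hb⟩))
    have hx2 : g σ ∉ Am := fun hb => hxQ (Or.inr hb)
    obtain ⟨δm, hδm, hm⟩ := hd _ hx2 εk hεk0
    obtain ⟨p, hp, hpl, hxp, hpr⟩ := not_bad (show g σ ∈ S (σ k) from ⟨σ, ⟨hσ, rfl⟩, rfl⟩) hx1
      (lt_min hδ (lt_min hδm hR0))
    exact ⟨p, ⟨hp.2.1, hpl.le.trans ((min_le_right _ _).trans (min_le_right _ _)),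
      hm p hp (hpl.trans_le ((min_le_right _ _).trans (min_le_left _ _))) hxp, _, hpr⟩,
      hpl.trans_le (min_le_left _ _), hxp⟩)
  have hv : ∀ p : Z × ℝ, ∃ v, p ∈ I → Rich h (4 * C + 1) (S v ∩ cb p) p.2 := by
    intro p
    by_cases hp : p ∈ I
    · obtain ⟨v, hv⟩ := (hIt hp).2.2.2
      exact ⟨v, fun _ => hv⟩
    · exact ⟨0, fun h => absurd h hp⟩
  choose v hv using hv
  have himg : ∀ p, g '' (n.1 ∩ {σ | σ k = v p} ∩ g ⁻¹' cb p) = S (v p) ∩ cb p :=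
    fun p => image_inter_preimage _ _ _
  refine ⟨I, fun p => n.1 ∩ {σ | σ k = v p} ∩ g ⁻¹' cb p, ⟨fun p hp => ?_, fun p hp σ hσ => hσ.1.1,
    fun p hp => (hIt hp).2.1.trans (min_le_left _ _), fun p hp => ⟨v p, fun σ hσ => hσ.1.2⟩,
    hnc, hfr, hsum⟩⟩
  have hpt := hIt hp
  refine ⟨hpt.1, hpt.2.1.trans (min_le_right _ _), (hpt.2.1.trans (min_le_left _ _)).trans hn.le0,
    ?_, ?_, hpt.2.2.1⟩
  · simp only [himg]; exact hv p hp
  · simp only [himg]; exact inter_subset_right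

theorem root_exists [BorelSpace Z] (G : Gg h) (V : VB h C δ0 Dom) [IsFiniteMeasure m]
    (hY : ¬ SF h (range g)) : ∃ n, Good h (4 * C + 1) δ0 g m 0 n := by
  obtain ⟨Am, hAm, hd⟩ := density G V m
  have hQ : SF h (Bd h (4 * C + 1) (range g) ∪ Am) := SF_union (Bd_SF G V _) hAm
  have : ∃ x ∈ range g, x ∉ Bd h (4 * C + 1) (range g) ∪ Am := by
    by_contra hcon
    push Not at hcon
    exact hY (SF_mono hcon hQ)
  obtain ⟨x, hxY, hx⟩ := this
  obtain ⟨δm, hδm, hm⟩ := hd x (fun hb => hx (Or.inr hb)) 1 (by simp)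
  obtain ⟨p, hp, hpl, hxp, hpr⟩ := not_bad hxY (fun hb => hx (Or.inl hb))
    (lt_min one_pos (lt_min hδm V.δ0pos))
  have himg : g '' (g ⁻¹' cb p) = range g ∩ cb p := by
    rw [image_preimage_eq_inter_range, inter_comm]
  refine ⟨(g ⁻¹' cb p, p), hp.2.1, ?_, (hpl.trans_le ((min_le_right _ _).trans (min_le_right _ _))).le,
    ?_, ?_, ?_⟩
  · simpa using (hpl.trans_le (min_le_left _ _)).le
  · simp only [himg]; exact hpr
  · simp only [himg]; exact inter_subset_right
  · simpa using hm p hp (hpl.trans_le ((min_le_right _ _).trans (min_le_left _ _))) hxp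
end exist

/-- descendants -/
def desc (I : ℕ → Set (ℕ → ℕ) × (Z × ℝ) → Finset (Z × ℝ))
    (Cf : ℕ → Set (ℕ → ℕ) × (Z × ℝ) → Z × ℝ → Set (ℕ → ℕ)) :
    ℕ → ℕ → Set (ℕ → ℕ) × (Z × ℝ) → Set (Set (ℕ → ℕ) × (Z × ℝ))
  | 0, _, n => {n}
  | j + 1, k, n => ⋃ p ∈ I k n, desc I Cf j (k + 1) (Cf k n p, p)

variable {I : ℕ → Set (ℕ → ℕ) × (Z × ℝ) → Finset (Z × ℝ)}
  {Cf : ℕ → Set (ℕ → ℕ) × (Z × ℝ) → Z × ℝ → Set (ℕ → ℕ)}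

theorem mem_desc_succ {j k : ℕ} {n d : Set (ℕ → ℕ) × (Z × ℝ)} :
    d ∈ desc I Cf (j + 1) k n ↔ ∃ p ∈ I k n, d ∈ desc I Cf j (k + 1) (Cf k n p, p) := by
  simp [desc]

theorem desc_fin (j : ℕ) : ∀ k n, (desc I Cf j k n).Finite := by
  induction j with
  | zero => intro k n; simp [desc]
  | succ j ih =>
    intro k n
    rw [desc]
    exact (I k n).finite_toSet.biUnion fun p _ => ih _ _

theorem desc_good (hst : ∀ k n, Good h A δ0 g m k n → Step h A δ0 g m k n (I k n) (Cf k n))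
    (j : ℕ) : ∀ k n, Good h A δ0 g m k n → ∀ d ∈ desc I Cf j k n, Good h A δ0 g m (k + j) d := by
  induction j with
  | zero =>
    intro k n hn d hd
    have : d = n := by simpa [desc] using hd
    rw [this]; exact hn
  | succ j ih =>
    intro k n hn d hd
    obtain ⟨p, hp, hd⟩ := mem_desc_succ.1 hd
    have := ih (k + 1) _ ((hst k n hn).good p hp) d hd
    rwa [show k + (j + 1) = k + 1 + j by omega]

theorem desc_sub (hst : ∀ k n, Good h A δ0 g m k n → Step h A δ0 g m k n (I k n) (Cf k n))
    (j : ℕ) : ∀ k n, Good h A δ0 g m k n → ∀ d ∈ desc I Cf j k n, d.1 ⊆ n.1 := by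
  induction j with
  | zero =>
    intro k n hn d hd
    have : d = n := by simpa [desc] using hd
    rw [this]
  | succ j ih =>
    intro k n hn d hd
    obtain ⟨p, hp, hd⟩ := mem_desc_succ.1 hd
    exact (ih (k + 1) _ ((hst k n hn).good p hp) d hd).trans ((hst k n hn).sub p hp)

theorem desc_anc (hst : ∀ k n, Good h A δ0 g m k n → Step h A δ0 g m k n (I k n) (Cf k n))
    (i j : ℕ) : ∀ k n, Good h A δ0 g m k n → ∀ d ∈ desc I Cf (i + j) k n,
      ∃ e ∈ desc I Cf i k n, d.1 ⊆ e.1 := by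
  induction i with
  | zero =>
    intro k n hn d hd
    exact ⟨n, by simp [desc], desc_sub hst _ k n hn d hd⟩
  | succ i ih =>
    intro k n hn d hd
    rw [show i + 1 + j = (i + j) + 1 by omega] at hd
    obtain ⟨p, hp, hd⟩ := mem_desc_succ.1 hd
    obtain ⟨e, he, hde⟩ := ih (k + 1) _ ((hst k n hn).good p hp) d hd
    exact ⟨e, mem_desc_succ.2 ⟨p, hp, he⟩, hde⟩

theorem desc_val (hst : ∀ k n, Good h A δ0 g m k n → Step h A δ0 g m k n (I k n) (Cf k n))
    (j : ℕ) : ∀ k n, Good h A δ0 g m k n → ∀ d ∈ desc I Cf (j + 1) k n,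
      ∃ v, ∀ σ ∈ d.1, σ (k + j) = v := by
  induction j with
  | zero =>
    intro k n hn d hd
    obtain ⟨p, hp, hd⟩ := mem_desc_succ.1 hd
    have : d = (Cf k n p, p) := by simpa [desc] using hd
    rw [this]; exact (hst k n hn).val p hp
  | succ j ih =>
    intro k n hn d hd
    obtain ⟨p, hp, hd⟩ := mem_desc_succ.1 hd
    have := ih (k + 1) _ ((hst k n hn).good p hp) d hd
    rwa [show k + (j + 1) = k + 1 + j by omega]

theorem desc_meas (G : Gg h)
    (hst : ∀ k n, Good h A δ0 g m k n → Step h A δ0 g m k n (I k n) (Cf k n))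
    (j : ℕ) : ∀ k n, Good h A δ0 g m k n →
      m (⋃ d ∈ desc I Cf j k n, cb d.2) ≤ ((2 * A) ^ (k + j))⁻¹ * (A ^ j * hr h n.2.2) := by
  classical
  induction j with
  | zero =>
    intro k n hn
    simpa [desc] using hn.meas
  | succ j ih =>
    intro k n hn
    have S := hst k n hn
    have hsub : (⋃ d ∈ desc I Cf (j + 1) k n, cb d.2) ⊆
        ⋃ p ∈ I k n, ⋃ d ∈ desc I Cf j (k + 1) (Cf k n p, p), cb d.2 := by
      intro x hx
      obtain ⟨d, hd, hx⟩ := mem_iUnion₂.1 hx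
      obtain ⟨p, hp, hd⟩ := mem_desc_succ.1 hd
      exact mem_iUnion₂.2 ⟨p, hp, mem_iUnion₂.2 ⟨d, hd, hx⟩⟩
    have hsum : ∑ p ∈ I k n, hr h p.2 ≤ A * hr h n.2.2 := by
      have h1 := S.frost n.2 hn.pos
      rw [Finset.filter_true_of_mem] at h1
      · exact h1
      · intro p hp
        have hg := S.good p hp
        obtain ⟨x, hx⟩ := hg.rich.nonempty G hg.pos
        exact ⟨S.lt p hp, x, hg.sub hx, hn.sub (image_mono (S.sub p hp) hx)⟩
    calc m (⋃ d ∈ desc I Cf (j + 1) k n, cb d.2)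
        ≤ m (⋃ p ∈ I k n, ⋃ d ∈ desc I Cf j (k + 1) (Cf k n p, p), cb d.2) := measure_mono hsub
      _ ≤ ∑ p ∈ I k n, m (⋃ d ∈ desc I Cf j (k + 1) (Cf k n p, p), cb d.2) :=
          measure_biUnion_finset_le _ _
      _ ≤ ∑ p ∈ I k n, ((2 * A) ^ (k + 1 + j))⁻¹ * (A ^ j * hr h p.2) :=
          Finset.sum_le_sum fun p hp => ih (k + 1) _ (S.good p hp)
      _ = ((2 * A) ^ (k + 1 + j))⁻¹ * (A ^ j * ∑ p ∈ I k n, hr h p.2) := by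
          rw [Finset.mul_sum, Finset.mul_sum]
      _ ≤ ((2 * A) ^ (k + 1 + j))⁻¹ * (A ^ j * (A * hr h n.2.2)) := by gcongr
      _ = _ := by
          rw [show k + (j + 1) = k + 1 + j by omega, pow_succ A j, mul_assoc (A ^ j)]

theorem desc_mass (G : Gg h) (hA : 1 ≤ A)
    (hst : ∀ k n, Good h A δ0 g m k n → Step h A δ0 g m k n (I k n) (Cf k n))
    (b : ℕ → Z × ℝ) (hb : ∀ i, 0 < (b i).2) (j : ℕ) : ∀ k n, Good h A δ0 g m k n →
      ∀ F : Finset ℕ, (∀ d ∈ desc I Cf j k n, ∃ i ∈ F, (g '' d.1 ∩ cb (b i)).Nonempty) →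
      (∀ d ∈ desc I Cf j k n, ∀ i ∈ F, d.2.2 ≤ (b i).2) →
      hr h n.2.2 ≤ A * ∑ i ∈ F, hr h (b i).2 := by
  classical
  induction j with
  | zero =>
    intro k n hn F h1 h2
    obtain ⟨i, hi, -⟩ := h1 n (by simp [desc])
    calc hr h n.2.2 ≤ hr h (b i).2 := hr_mono G (h2 n (by simp [desc]) i hi)
      _ ≤ ∑ i ∈ F, hr h (b i).2 := Finset.single_le_sum (f := fun i => hr h (b i).2)
          (fun _ _ => zero_le) hi
      _ = 1 * ∑ i ∈ F, hr h (b i).2 := (one_mul _).symm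
      _ ≤ A * ∑ i ∈ F, hr h (b i).2 := mul_le_mul_left hA _
  | succ j ih =>
    intro k n hn F h1 h2
    have S := hst k n hn
    set J := I k n with hJ
    set Fp : Z × ℝ → Finset ℕ := fun p => F.filter fun i => (g '' (Cf k n p) ∩ cb (b i)).Nonempty
      with hFp
    set Big : Finset ℕ := F.filter fun i => ∃ p ∈ J, ∃ p' ∈ J, p ≠ p' ∧ i ∈ Fp p ∧ i ∈ Fp p'
      with hBig
    have hFpm : ∀ p i, i ∈ Fp p ↔ i ∈ F ∧ (g '' (Cf k n p) ∩ cb (b i)).Nonempty := by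
      intro p i; simp [hFp]
    have htouch : ∀ p ∈ J, ∀ i ∈ Fp p, (Metric.closedBall (b i).1 (b i).2 ∩ cb p).Nonempty := by
      intro p hp i hi
      obtain ⟨x, hx1, hx2⟩ := ((hFpm p i).1 hi).2
      exact ⟨x, hx2, (S.good p hp).sub hx1⟩
    set J1 := J.filter fun p => ∃ i ∈ Big, i ∈ Fp p with hJ1
    set J2 := J.filter fun p => ¬ ∃ i ∈ Big, i ∈ Fp p with hJ2
    have hsplit : ∑ p ∈ J, hr h p.2 = ∑ p ∈ J1, hr h p.2 + ∑ p ∈ J2, hr h p.2 :=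
      (Finset.sum_filter_add_sum_filter_not J _ _).symm
    have e1 : ∑ p ∈ J1, hr h p.2 ≤ A * ∑ i ∈ Big, hr h (b i).2 := by
      have hsub : J1 ⊆ Big.biUnion fun i => J.filter (tch (b i)) := by
        intro p hp
        obtain ⟨hpJ, i, hiB, hip⟩ := Finset.mem_filter.1 hp
        rw [Finset.mem_biUnion]
        refine ⟨i, hiB, Finset.mem_filter.2 ⟨hpJ, ?_, ?_⟩⟩
        · obtain ⟨_, q, hq, q', hq', hqq, hiq, hiq'⟩ := Finset.mem_filter.1 hiB
          obtain ⟨r, hrJ, hrp, hir⟩ : ∃ r ∈ J, p ≠ r ∧ i ∈ Fp r := by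
            by_cases hpq : p = q
            · exact ⟨q', hq', hpq ▸ hqq, hiq'⟩
            · exact ⟨q, hq, hpq, hiq⟩
          by_contra hcon
          push Not at hcon
          exact S.nc p hpJ r hrJ hrp (b i).1 (b i).2 (hcon.le.trans (le_max_left _ _))
            (htouch p hpJ i hip) (htouch r hrJ i hir)
        · obtain ⟨x, hx1, hx2⟩ := htouch p hpJ i hip
          exact ⟨x, hx2, hx1⟩
      calc ∑ p ∈ J1, hr h p.2 ≤ ∑ p ∈ Big.biUnion fun i => J.filter (tch (b i)), hr h p.2 :=
            Finset.sum_le_sum_of_subset hsub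
        _ ≤ ∑ i ∈ Big, ∑ p ∈ J.filter (tch (b i)), hr h p.2 := by
            exact sum_biUnion_le' (fun p : Z × ℝ => hr h p.2) Big _
        _ ≤ ∑ i ∈ Big, A * hr h (b i).2 := Finset.sum_le_sum fun i _ => S.frost (b i) (hb i)
        _ = A * ∑ i ∈ Big, hr h (b i).2 := (Finset.mul_sum _ _ _).symm
    have e2 : ∑ p ∈ J2, hr h p.2 ≤ A * ∑ i ∈ F.filter (fun i => i ∉ Big), hr h (b i).2 := by
      have hIH : ∀ p ∈ J2, hr h p.2 ≤ A * ∑ i ∈ Fp p, hr h (b i).2 := by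
        intro p hp
        obtain ⟨hpJ, hno⟩ := Finset.mem_filter.1 hp
        refine ih (k + 1) (Cf k n p, p) (S.good p hpJ) (Fp p) ?_ ?_
        · intro d hd
          obtain ⟨i, hi, x, hx1, hx2⟩ := h1 d (mem_desc_succ.2 ⟨p, hpJ, hd⟩)
          refine ⟨i, (hFpm p i).2 ⟨hi, x, ?_, hx2⟩, x, hx1, hx2⟩
          exact image_mono (desc_sub hst _ _ _ (S.good p hpJ) d hd) hx1
        · intro d hd i hi
          exact h2 d (mem_desc_succ.2 ⟨p, hpJ, hd⟩) i ((hFpm p i).1 hi).1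
      calc ∑ p ∈ J2, hr h p.2 ≤ ∑ p ∈ J2, A * ∑ i ∈ Fp p, hr h (b i).2 := Finset.sum_le_sum hIH
        _ = A * ∑ p ∈ J2, ∑ i ∈ Fp p, hr h (b i).2 := (Finset.mul_sum _ _ _).symm
        _ = A * ∑ i ∈ J2.biUnion Fp, hr h (b i).2 := by
            rw [Finset.sum_biUnion]
            intro p hp q hq hpq
            rw [Function.onFun, Finset.disjoint_left]
            intro i hip hiq
            obtain ⟨hpJ, hno⟩ := Finset.mem_filter.1 (Finset.mem_coe.1 hp)
            obtain ⟨hqJ, _⟩ := Finset.mem_filter.1 (Finset.mem_coe.1 hq)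
            exact hno ⟨i, Finset.mem_filter.2 ⟨((hFpm p i).1 hip).1, p, hpJ, q, hqJ, hpq, hip, hiq⟩,
              hip⟩
        _ ≤ _ := by
            refine mul_le_mul_right (Finset.sum_le_sum_of_subset ?_) _
            intro i hi
            obtain ⟨p, hp, hip⟩ := Finset.mem_biUnion.1 hi
            obtain ⟨hpJ, hno⟩ := Finset.mem_filter.1 hp
            exact Finset.mem_filter.2 ⟨((hFpm p i).1 hip).1, fun hB => hno ⟨i, hB, hip⟩⟩
    have hBF : F.filter (fun i => i ∈ Big) = Big := by
      ext i
      rw [Finset.mem_filter]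
      exact ⟨fun h => h.2, fun h => ⟨(Finset.mem_filter.1 h).1, h⟩⟩
    calc hr h n.2.2 ≤ ∑ p ∈ J, hr h p.2 := S.sum
      _ = _ := hsplit
      _ ≤ _ := add_le_add e1 e2
      _ = A * (∑ i ∈ F.filter (fun i => i ∈ Big), hr h (b i).2 +
            ∑ i ∈ F.filter (fun i => i ∉ Big), hr h (b i).2) := by rw [hBF, mul_add]
      _ = A * ∑ i ∈ F, hr h (b i).2 := by rw [Finset.sum_filter_add_sum_filter_not]

end tree
end S5
namespace S5
section mainK
variable {Z : Type*} [MetricSpace Z] {h : ℝ≥0 → ℝ≥0∞} {C : ℝ≥0∞} {δ0 : ℝ}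
  {Dom : Z × ℝ → Z × ℝ → Prop} [MeasurableSpace Z]
  {g : (ℕ → ℕ) → Z} {m : Measure Z}

theorem cptT (b : ℕ → ℕ) : IsCompact {σ : ℕ → ℕ | ∀ i, σ i ≤ b i} := by
  have : {σ : ℕ → ℕ | ∀ i, σ i ≤ b i} = Set.pi univ fun i => Iic (b i) := by
    ext σ; simp [Pi.le_def]
  rw [this]
  exact isCompact_univ_pi fun i => (finite_Iic (b i)).isCompact

/-- abstract compactness argument -/
theorem key_open (hg : Continuous g) (b : ℕ → ℕ) (L : ℕ → Set Z) (hL : ∀ i, IsClosed (L i))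
    (P : ℕ → Set (ℕ → ℕ)) (hP : ∀ i j, i < j → ∀ σ ∈ P j, σ i ≤ b i)
    (hPL : ∀ i j, i ≤ j → ∀ σ ∈ P j, g σ ∈ L i) (U : Set Z) (hU : IsOpen U)
    (hKU : g '' {σ : ℕ → ℕ | ∀ i, σ i ≤ b i} ∩ ⋂ i, L i ⊆ U) :
    ∃ j0, ∀ j ≥ j0, ∀ σ ∈ P j, g σ ∈ U := by
  by_contra hcon
  push Not at hcon
  choose J hJ s hs hsU using hcon
  set T : Set (ℕ → ℕ) := {σ | ∀ i, σ i ≤ b i} with hT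
  have ht : ∀ n, (fun i => min (s n i) (b i)) ∈ T := fun n i => min_le_right _ _
  obtain ⟨τ, hτ, φ, hφ, hlim⟩ := (cptT b).tendsto_subseq ht
  have hlim2 : Tendsto (fun n => s (φ n)) atTop (𝓝 τ) := by
    rw [tendsto_pi_nhds] at hlim ⊢
    intro i
    refine (hlim i).congr' ?_
    filter_upwards [eventually_gt_atTop i] with n hn
    exact min_eq_left (hP i _ (hn.trans_le ((hφ.id_le n).trans (hJ _))) _ (hs _))
  have hglim : Tendsto (fun n => g (s (φ n))) atTop (𝓝 (g τ)) := (hg.tendsto τ).comp hlim2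
  have h1 : g τ ∈ U := by
    refine hKU ⟨⟨τ, hτ, rfl⟩, mem_iInter.2 fun i => ?_⟩
    refine (hL i).mem_of_tendsto hglim ?_
    filter_upwards [eventually_ge_atTop i] with n hn
    exact hPL i _ (hn.trans ((hφ.id_le n).trans (hJ _))) _ (hs _)
  obtain ⟨n, hn⟩ := (hglim.eventually (hU.mem_nhds h1)).exists
  exact hsU _ hn

theorem main_K [TopologicalSpace.SeparableSpace Z] [Nonempty Z] [BorelSpace Z] (G : Gg h)
    (V : VB h C δ0 Dom) (m : Measure Z) [IsFiniteMeasure m] (hg : Continuous g)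
    (hY : ¬ SF h (range g)) :
    ∃ K : Set Z, IsCompact K ∧ K ⊆ range g ∧ m K = 0 ∧ 0 < hausdorffM h K := by
  classical
  set A : ℝ≥0∞ := 4 * C + 1 with hA
  have hAt : A ≠ ⊤ := by simp [hA, ENNReal.mul_eq_top, V.Ct]
  have hA1 : 1 ≤ A := le_add_self
  have hA0 : A ≠ 0 := (zero_lt_one.trans_le hA1).ne'
  have hex : ∀ k n, ∃ I Cf, Good h A δ0 g m k n → Step h A δ0 g m k n I Cf := by
    intro k n
    by_cases hn : Good h A δ0 g m k n
    · obtain ⟨I, Cf, hs⟩ := step_exists G V k n hn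
      exact ⟨I, Cf, fun _ => hs⟩
    · exact ⟨∅, fun _ => ∅, fun hh => absurd hh hn⟩
  choose I Cf hst using hex
  obtain ⟨n, hn⟩ := root_exists (m := m) G V hY
  have hb : ∀ i, ∃ B, ∀ d ∈ desc I Cf (i + 1) 0 n, ∀ σ ∈ d.1, σ i ≤ B := by
    intro i
    have hv := desc_val hst i 0 n hn
    simp only [zero_add] at hv
    choose! v hv using hv
    refine ⟨∑ d ∈ (desc_fin (I := I) (Cf := Cf) (i + 1) 0 n).toFinset, v d, fun d hd σ hσ => ?_⟩
    rw [hv d hd σ hσ]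
    exact Finset.single_le_sum (f := v) (fun _ _ => Nat.zero_le _) (by simpa using hd)
  choose b hb using hb
  set L : ℕ → Set Z := fun j => ⋃ d ∈ desc I Cf j 0 n, cb d.2 with hLdef
  have hL : ∀ i, IsClosed (L i) := fun i =>
    (desc_fin i 0 n).isClosed_biUnion fun d _ => Metric.isClosed_closedBall
  have hgood := fun j => desc_good hst j 0 n hn
  simp only [zero_add] at hgood
  have hanc : ∀ i j, i ≤ j → ∀ d ∈ desc I Cf j 0 n, ∃ e ∈ desc I Cf i 0 n, d.1 ⊆ e.1 := by
    intro i j hij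
    obtain ⟨l, rfl⟩ := Nat.exists_eq_add_of_le hij
    exact desc_anc hst i l 0 n hn
  set K : Set Z := g '' {σ : ℕ → ℕ | ∀ i, σ i ≤ b i} ∩ ⋂ i, L i with hK
  have hKc : IsCompact K := ((cptT b).image hg).inter_right (isClosed_iInter hL)
  have hhn : hr h n.2.2 ≠ ⊤ := ne_top_of_le_ne_top V.δ0fin (hr_mono G hn.le0)
  refine ⟨K, hKc, inter_subset_left.trans (image_subset_range _ _), ?_, ?_⟩
  · have hle : ∀ j : ℕ, m K ≤ (2⁻¹ : ℝ≥0∞) ^ j * hr h n.2.2 := by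
      intro j
      calc m K ≤ m (L j) := measure_mono (inter_subset_right.trans (iInter_subset _ j))
        _ ≤ ((2 * A) ^ (0 + j))⁻¹ * (A ^ j * hr h n.2.2) := desc_meas G hst j 0 n hn
        _ = _ := by
          rw [zero_add, mul_pow, ENNReal.mul_inv (Or.inr (ENNReal.pow_ne_top hAt))
            (Or.inr (pow_ne_zero _ hA0)), mul_assoc, ← mul_assoc (A ^ j)⁻¹,
            ENNReal.inv_mul_cancel (pow_ne_zero _ hA0) (ENNReal.pow_ne_top hAt), one_mul,
            ENNReal.inv_pow]
    have ht : Tendsto (fun j : ℕ => (2⁻¹ : ℝ≥0∞) ^ j * hr h n.2.2) atTop (𝓝 (0 * hr h n.2.2)) :=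
      ENNReal.Tendsto.mul_const (ENNReal.tendsto_pow_atTop_nhds_zero_of_lt_one (by norm_num))
        (Or.inr hhn)
    rw [zero_mul] at ht
    exact le_antisymm (ge_of_tendsto' ht hle) bot_le
  · by_contra hH
    have hH0 : hausdorffM h K = 0 := by simpa using hH
    have hHd : Hd h 1 K < hr h n.2.2 / A := by
      have : Hd h 1 K = 0 := le_antisymm ((Hd_le_H one_pos).trans hH0.le) bot_le
      rw [this]
      exact ENNReal.div_pos (hr_pos G hn.pos).ne' hAt
    obtain ⟨p, hpB, hcov, hsum⟩ := ball_cover G hHd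
    have hpp : ∀ i, 0 < (p i).2 := fun i => (hpB i).2.1
    obtain ⟨F, hF⟩ := hKc.elim_finite_subcover (fun i => Metric.ball (p i).1 (p i).2)
      (fun i => Metric.isOpen_ball) hcov
    obtain ⟨j0, hj0⟩ := key_open hg b L hL (fun j => ⋃ d ∈ desc I Cf j 0 n, d.1)
      (by
        intro i j hij σ hσ
        obtain ⟨d, hd, hσd⟩ := mem_iUnion₂.1 hσ
        obtain ⟨e, he, hde⟩ := hanc (i + 1) j hij d hd
        exact hb i e he σ (hde hσd))
      (by
        intro i j hij σ hσ
        obtain ⟨d, hd, hσd⟩ := mem_iUnion₂.1 hσ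
        obtain ⟨e, he, hde⟩ := hanc i j hij d hd
        exact mem_iUnion₂.2 ⟨e, he, (hgood i e he).sub ⟨σ, hde hσd, rfl⟩⟩)
      (⋃ i ∈ F, Metric.ball (p i).1 (p i).2)
      (isOpen_biUnion fun i _ => Metric.isOpen_ball) hF
    obtain ⟨ρ, hρ, hρF⟩ : ∃ ρ : ℝ, 0 < ρ ∧ ∀ i ∈ F, ρ ≤ (p i).2 := by
      rcases F.eq_empty_or_nonempty with hFe | hFe
      · exact ⟨1, one_pos, by simp [hFe]⟩
      · refine ⟨F.inf' hFe fun i => (p i).2, ?_, fun i hi => Finset.inf'_le _ hi⟩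
        rw [Finset.lt_inf'_iff]
        exact fun i _ => hpp i
    obtain ⟨j1, hj1⟩ := exists_nat_one_div_lt hρ
    set j := max j0 j1 with hj
    have hmass := desc_mass G hA1 hst p hpp j 0 n hn F
      (by
        intro d hd
        obtain ⟨x, σ, hσ, rfl⟩ := Rich.nonempty G (hgood j d hd).rich (hgood j d hd).pos
        obtain ⟨i, hi, hx⟩ := mem_iUnion₂.1 (hj0 j (le_max_left _ _) σ (mem_iUnion₂.2 ⟨d, hd, hσ⟩))
        exact ⟨i, hi, g σ, ⟨σ, hσ, rfl⟩, Metric.ball_subset_closedBall hx⟩)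
      (by
        intro d hd i hi
        refine (hgood j d hd).small.trans (le_trans ?_ (hj1.le.trans (hρF i hi)))
        apply one_div_le_one_div_of_le (by positivity)
        have : (j1 : ℝ) ≤ j := by exact_mod_cast le_max_right _ _
        linarith)
    have h2 : ∑ i ∈ F, hr h (p i).2 < hr h n.2.2 / A := (ENNReal.sum_le_tsum F).trans_lt hsum
    have h3 := (ENNReal.lt_div_iff_mul_lt (Or.inl hA0) (Or.inl hAt)).1 h2
    rw [mul_comm] at h3
    exact absurd hmass (not_le.2 h3)

end mainK
end S5
namespace S5
section capac
variable {Z : Type*} [MetricSpace Z] {h : ℝ≥0 → ℝ≥0∞} [MeasurableSpace Z] [BorelSpace Z]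
  {g : (ℕ → ℕ) → Z}

theorem capac (hg : Continuous g) (ν : Measure Z) [IsFiniteMeasure ν] (c : ℝ≥0∞)
    (hc : c < ν (range g)) : ∃ K : Set Z, IsCompact K ∧ K ⊆ range g ∧ c ≤ ν K := by
  have hstep : ∀ (j : ℕ) (P : Set (ℕ → ℕ)), ∃ n : ℕ, c < ν (g '' P) →
      c < ν (g '' (P ∩ {σ | σ j ≤ n})) := by
    intro j P
    by_cases hP : c < ν (g '' P)
    · have hmono : Monotone fun n : ℕ => g '' (P ∩ {σ | σ j ≤ n}) := fun a b hab =>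
        image_mono fun σ hσ => ⟨hσ.1, le_trans hσ.2 hab⟩
      have hU : g '' P = ⋃ n : ℕ, g '' (P ∩ {σ | σ j ≤ n}) := by
        rw [← image_iUnion, ← inter_iUnion]
        congr 1
        refine (inter_eq_left.2 fun σ _ => mem_iUnion.2 ⟨σ j, le_refl (σ j)⟩).symm
      have h2 := hP
      rw [hU, hmono.measure_iUnion, lt_iSup_iff] at h2
      obtain ⟨n, hn⟩ := h2
      exact ⟨n, fun _ => hn⟩
    · exact ⟨0, fun hh => absurd hh hP⟩
  choose N hN using hstep
  let P : ℕ → Set (ℕ → ℕ) := fun j => Nat.rec univ (fun j Q => Q ∩ {σ | σ j ≤ N j Q}) j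
  have hPs : ∀ j, P (j + 1) = P j ∩ {σ | σ j ≤ N j (P j)} := fun j => rfl
  have hPc : ∀ j, c < ν (g '' P j) := by
    intro j
    induction j with
    | zero => simpa [P] using hc
    | succ j ih => rw [hPs]; exact hN j _ ih
  have hPb : ∀ i j, i < j → ∀ σ ∈ P j, σ i ≤ N i (P i) := by
    intro i j hij
    induction j with
    | zero => omega
    | succ j ih =>
      intro σ hσ
      rw [hPs] at hσ
      rcases Nat.lt_succ_iff_lt_or_eq.1 hij with h1 | h1
      · exact ih h1 σ hσ.1
      · subst h1; exact hσ.2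
  set b : ℕ → ℕ := fun i => N i (P i) with hb
  refine ⟨g '' {σ | ∀ i, σ i ≤ b i}, (cptT b).image hg, image_subset_range _ _, ?_⟩
  rw [Set.measure_eq_iInf_isOpen]
  refine le_iInf₂ fun U hKU => le_iInf fun hU => ?_
  obtain ⟨j, hj⟩ := key_open hg b (fun _ => univ) (fun _ => isClosed_univ) P hPb
    (fun _ _ _ _ _ => mem_univ _) U hU (inter_subset_left.trans hKU)
  refine (hPc j).le.trans (measure_mono ?_)
  rintro _ ⟨σ, hσ, rfl⟩
  exact hj j le_rfl σ hσ

theorem range_null (hg : Continuous g) (ν : Measure Z) [IsFiniteMeasure ν] :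
    NullMeasurableSet (range g) ν := by
  by_cases h0 : ν (range g) = 0
  · exact NullMeasurableSet.of_null h0
  · obtain ⟨u, -, hu, hlim⟩ := exists_seq_strictMono_tendsto' (pos_iff_ne_zero.2 h0)
    choose K hKc hKs hKu using fun n => capac hg ν (u n) (hu n).2
    have hm : MeasurableSet (⋃ n, K n) := MeasurableSet.iUnion fun n => (hKc n).measurableSet
    have hle : ν (range g) ≤ ν (⋃ n, K n) :=
      le_of_tendsto' hlim fun n => (hKu n).trans (measure_mono (subset_iUnion _ _))
    exact hm.nullMeasurableSet.congr
      (ae_eq_of_subset_of_measure_ge (iUnion_subset hKs) hle hm.nullMeasurableSet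
        (measure_ne_top _ _))

theorem sf_sigma (hg : Continuous g) (hSF : SF h (range g)) :
    SigmaFiniteSet (hausdorffM h) (range g) := by
  obtain ⟨A, hA, hAf⟩ := hSF
  set M : Measure Z := Measure.mkMetric (fun d => h d.toNNReal) with hM
  have hMe : ∀ s, M s = hausdorffM h s := fun s => by
    rw [hM, ← Measure.coe_toOuterMeasure, Measure.mkMetric_toOuterMeasure]; rfl
  have hB : ∀ n, M (toMeasurable M (A n)) < ⊤ := fun n => by
    rw [measure_toMeasurable, hMe]; exact hAf n
  refine ⟨fun n => range g ∩ toMeasurable M (A n), fun n => ⟨?_, ?_⟩, ?_⟩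
  · have : IsFiniteMeasure (M.restrict (toMeasurable M (A n))) :=
      ⟨by rw [Measure.restrict_apply_univ]; exact hB n⟩
    have h1 := range_null hg (M.restrict (toMeasurable M (A n)))
    rw [nullMeasurableSet_restrict (measurableSet_toMeasurable _ _).nullMeasurableSet] at h1
    intro t
    have := measure_inter_add_sdiff₀ t h1
    simp only [hMe] at this
    exact this.symm
  · rw [← hMe]
    exact (measure_mono inter_subset_right).trans_lt (hB n)
  · rw [← inter_iUnion]
    exact (inter_eq_left.2 (hA.trans (iUnion_mono fun n => subset_toMeasurable _ _))).symm

end capac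
end S5
namespace S5

theorem exists_K {X : Type*} {Z : Type*} [MetricSpace Z] (μ : OuterMeasure X)
    (hsf : SigmaFiniteSet μ (Set.univ : Set X))
    (Y : Set Z) (h : ℝ≥0 → ℝ≥0∞) (hH : PropertyHInf Y h)
    (f : X → Z) (hmeas : ∀ O : Set Z, IsOpen O → μ.IsCaratheodory (f ⁻¹' O)) :
    ∃ K : Set Z, IsCompact K ∧ K ⊆ Y ∧ μ (f ⁻¹' K) = 0 ∧ 0 < hausdorffM h K := by
  obtain ⟨hP, hns⟩ := hH
  have := hP.separable
  have han := hP.analytic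
  rw [AnalyticSet] at han
  rcases han with hY | ⟨g, hg, hgY⟩
  · exfalso
    apply hns
    refine ⟨fun _ => ∅, fun n => ⟨OuterMeasure.isCaratheodory_empty _, by simp⟩, by simp [hY]⟩
  have : Nonempty Z := ⟨g 0⟩
  borelize Z
  obtain ⟨G, C, δ0, Dom, V⟩ := vb_exists hP
  letI : MeasurableSpace X := μ.caratheodory
  set μ' : Measure X := μ.toMeasure le_rfl with hμ'
  have hμ'e : ∀ s, μ.IsCaratheodory s → μ' s = μ s := fun s hs =>
    toMeasure_apply μ le_rfl hs
  have : SigmaFinite μ' := by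
    obtain ⟨A, hA, hU⟩ := hsf
    exact ⟨⟨⟨A, fun _ => trivial, fun n => by rw [hμ'e _ (hA n).1]; exact (hA n).2, hU.symm⟩⟩⟩
  have hfm : Measurable f := measurable_of_isOpen fun O hO => hmeas O hO
  obtain ⟨K, hK, hKY, hm, hpos⟩ := main_K (m := μ'.toFinite.map f) G V hg (fun hSF => hns (by
    rw [← hgY]; exact sf_sigma hg hSF))
  refine ⟨K, hK, hgY ▸ hKY, ?_, hpos⟩
  have hKm := hK.measurableSet
  rw [Measure.map_apply hfm hKm, toFinite_apply_eq_zero_iff, hμ'e _ (hfm hKm)] at hm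
  exact hm

theorem perfect_conv {X : Type*} [TopologicalSpace X] [T1Space X] {D : Set X} (hD : Perfect D) :
    PerfectSet D := by
  refine ⟨hD.closed, fun O hO hne hfin => ?_⟩
  obtain ⟨x, hxO, hxD⟩ := hne
  have h1 := hD.acc x hxD
  have h2 : O \ ((O ∩ D) \ {x}) ∈ 𝓝 x :=
    (hO.sdiff (hfin.subset sdiff_subset).isClosed).mem_nhds ⟨hxO, fun hh => hh.2 rfl⟩
  rw [accPt_iff_nhds] at h1
  obtain ⟨y, ⟨hy1, hyD⟩, hyx⟩ := h1 _ h2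
  exact hy1.2 ⟨⟨hy1.1, hyD⟩, hyx⟩

end S5

/-- Theorem `GeneralResult`. -/
theorem statement_5 {X : Type*} [TopologicalSpace X] {Z : Type*} [MetricSpace Z]
    (μ : MeasureTheory.OuterMeasure X)
    (hBorel : ∀ B : Set X, MeasurableSet[borel X] B → μ.IsCaratheodory B)
    (hsf : SigmaFiniteSet μ (Set.univ : Set X))
    (Y : Set Z) (h : ℝ≥0 → ℝ≥0∞) (hH : PropertyHInf Y h)
    (f : X → Z) (hrange : Set.range f = Y)
    (hmeas : ∀ O : Set Z, IsOpen O → μ.IsCaratheodory (f ⁻¹' O)) :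
    (∃ N : Set X, μ N = 0 ∧ 0 < hausdorffM h (f '' N)) ∧
    (SecondCountableTopology X → T1Space X →
      (∀ F : Set Z, IsClosed F →
        ∃ C : ℕ → Set X, (∀ n, IsClosed (C n)) ∧ f ⁻¹' F = ⋃ n, C n) →
      ∃ N : Set X, PerfectSet N ∧ μ N = 0 ∧ 0 < hausdorffM h (f '' N)) := by
  obtain ⟨K, hK, hKY, hK0, hKp⟩ := S5.exists_K μ hsf Y h hH f hmeas
  have G : S5.Gg h := (S5.vb_exists hH.1).1
  have himg : f '' (f ⁻¹' K) = K := by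
    rw [image_preimage_eq_iff, hrange]; exact hKY
  refine ⟨⟨f ⁻¹' K, hK0, by rw [himg]; exact hKp⟩, fun _ _ hF => ?_⟩
  obtain ⟨E, hEc, hE⟩ := hF K hK.isClosed
  obtain ⟨n, hn⟩ : ∃ n, 0 < hausdorffM h (f '' E n) := by
    by_contra hcon
    push Not at hcon
    have h1 : hausdorffM h (⋃ n, f '' E n) = 0 :=
      measure_iUnion_null fun n => le_antisymm (hcon n) bot_le
    rw [← image_iUnion, ← hE, himg] at h1
    exact hKp.ne' h1
  obtain ⟨V, D, hV, hD, hVD⟩ := exists_countable_union_perfect_of_isClosed (hEc n)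
  refine ⟨D, S5.perfect_conv hD, ?_, ?_⟩
  · refine le_antisymm ((measure_mono ?_).trans hK0.le) bot_le
    rw [hE]
    exact fun x hx => mem_iUnion.2 ⟨n, hVD ▸ Or.inr hx⟩
  · by_contra hcon
    have h1 : hausdorffM h (f '' D) = 0 := by simpa using hcon
    have h2 : hausdorffM h (f '' E n) ≤ 0 := by
      rw [hVD, image_union]
      refine (measure_union_le _ _).trans ?_
      rw [h1, S5.H_countable G (hV.image f), add_zero]
    exact absurd hn (not_lt.2 h2)
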